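/- arXiv:1807.09498 — 6 statements merged into one kernel-verified Lean document; each statement's English description precedes it below -/
import Mathlib

section
/- Let S ⊆ ℝ² be a finite set and 𝒳 a family of subsets of ℝ². Let (a,b), (a',b') ∈ Φ(S,𝒳) be two candidate pairs such that no three of the points a, b, a', b' are collinear and the segments [a,b] and [a',b'] cross. Then there exists X ∈ 𝒳 such that either X ∩ {a,b,a',b'} = {a,b} or X ∩ {a,b,a',b'} = {a',b'}. -/
/-!
Suppose neither range has the required property. The range `X` witnessing `(a, b)` then contains
an endpoint `c` of `[a', b']`, and the range `X'` witnessing `(a', b')` contains an endpoint `e` of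
`[a, b]`. With `d`, `f` the remaining endpoints, minimality in `X` gives `|ef| ≤ |cf|` and
minimality in `X'` gives `|cd| ≤ |ed|`. But in the quadrilateral with diagonals `ef` and `cd` the
two opposite sides `cf`, `ed` have smaller total length than the diagonals, by the triangle
inequality through the crossing point, strictly as no three of the points are
collinear (`false_of_cross`).
-/

open EuclideanGeometry

noncomputable section

/-- The Euclidean plane `ℝ²`. -/
abbrev Pt := EuclideanSpace ℝ (Fin 2)

/-- The translate `Γ_p = p + Γ` of a set `Γ ⊆ ℝ²`. -/
def tr (p : Pt) (Γ : Set Pt) : Set Pt := (p + ·) '' Γ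
/-- `(a, b)` is a closest pair of the set `T`: `a, b` are distinct points of `T` whose distance
is at most the distance between any two distinct points of `T`. -/
def IsClosestPair (T : Set Pt) (a b : Pt) : Prop :=
  a ∈ T ∧ b ∈ T ∧ a ≠ b ∧ ∀ x ∈ T, ∀ y ∈ T, x ≠ y → dist a b ≤ dist x y

/-- `Φ(S, 𝒳)`: the set of candidate pairs of `S` with respect to the family of ranges `𝒳`,
i.e. pairs that are a closest pair of `S ∩ X` for some `X ∈ 𝒳`. -/
def CandPairs (S : Set Pt) (𝒳 : Set (Set Pt)) : Set (Pt × Pt) :=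
  {φ | ∃ X ∈ 𝒳, IsClosestPair (S ∩ X) φ.1 φ.2}

/-- `L_Γ`: the collection of all translates of `Γ`. -/
def Translates (Γ : Set Pt) : Set (Set Pt) := {X | ∃ p : Pt, X = tr p Γ}

/-- The segments `[a,b]` and `[a',b']` cross: the open segments have a common point. -/
def SegCross (a b a' b' : Pt) : Prop :=
  (openSegment ℝ a b ∩ openSegment ℝ a' b').Nonempty

/-- All pairwise distances of points of `S` are distinct. -/
def DistinctDists (S : Set Pt) : Prop :=
  ∀ a ∈ S, ∀ b ∈ S, ∀ c ∈ S, ∀ d ∈ S,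
    a ≠ b → c ≠ d → dist a b = dist c d → ({a, b} : Set Pt) = {c, d}

/-- No three points of `S` are collinear. -/
def NoThreeCollinear (S : Set Pt) : Prop :=
  ∀ a ∈ S, ∀ b ∈ S, ∀ c ∈ S, a ≠ b → a ≠ c → b ≠ c →
    ¬ Collinear ℝ ({a, b, c} : Set Pt)

lemma collinear_of_common_line {p o q r : Pt} (hpo : p ≠ o)
    (hq : Collinear ℝ ({p, o, q} : Set Pt)) (hr : Collinear ℝ ({p, o, r} : Set Pt)) :
    Collinear ℝ ({p, q, r} : Set Pt) := by
  have h1 : q ∈ line[ℝ, p, o] :=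
    hq.mem_affineSpan_of_mem_of_ne (by simp) (by simp) (by simp) hpo
  have h2 : r ∈ line[ℝ, p, o] :=
    hr.mem_affineSpan_of_mem_of_ne (by simp) (by simp) (by simp) hpo
  refine (collinear_insert_insert_of_mem_affineSpan_pair h1 h2).subset ?_
  intro x hx
  simp only [Set.mem_insert_iff, Set.mem_singleton_iff] at hx ⊢
  tauto

lemma collinear_of_mem_openSegment {o p q : Pt} (h : o ∈ openSegment ℝ p q) :
    Collinear ℝ ({p, o, q} : Set Pt) :=
  (mem_segment_iff_wbtw.1 (openSegment_subset_segment ℝ p q h)).collinear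

lemma ne_of_mem_openSegment {o p q : Pt} (h : o ∈ openSegment ℝ p q) (hpq : p ≠ q) :
    p ≠ o := by
  rintro rfl
  exact hpq (left_mem_openSegment_iff.1 h)

/-- The diagonals `ef`, `cd` of a quadrilateral cannot be no longer than the opposite sides
`cf`, `ed` respectively. The endpoints `f` and `d` are allowed to coincide: then the crossing
itself already forces `c, e, f` to be collinear. -/
lemma false_of_cross {c d e f : Pt} (hcd : c ≠ d) (hef : e ≠ f)
    (hcross : SegCross e f c d)
    (hcfd : f ≠ d → ¬ Collinear ℝ ({c, f, d} : Set Pt))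
    (hcef : ¬ Collinear ℝ ({c, e, f} : Set Pt))
    (h1 : dist e f ≤ dist c f) (h2 : dist c d ≤ dist e d) : False := by
  obtain ⟨o, ho, ho'⟩ := hcross
  have e1 : dist e o + dist o f = dist e f :=
    dist_add_dist_eq_iff.2 (mem_segment_iff_wbtw.1 (openSegment_subset_segment ℝ _ _ ho))
  have e2 : dist c o + dist o d = dist c d :=
    dist_add_dist_eq_iff.2 (mem_segment_iff_wbtw.1 (openSegment_subset_segment ℝ _ _ ho'))
  have t1 := dist_triangle c o f
  have t2 := dist_triangle e o d
  by_cases hfd : f = d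
  · subst hfd
    rw [openSegment_symm] at ho ho'
    have := collinear_of_common_line (ne_of_mem_openSegment ho hef.symm)
      (collinear_of_mem_openSegment ho') (collinear_of_mem_openSegment ho)
    refine hcef (this.subset ?_)
    intro x hx
    simp only [Set.mem_insert_iff, Set.mem_singleton_iff] at hx ⊢
    tauto
  · -- All the inequalities are tight, so `o` also lies on `[c, f]`.
    have hw : Wbtw ℝ c o f := dist_add_dist_eq_iff.1 (by linarith)
    exact hcfd hfd (collinear_of_common_line (ne_of_mem_openSegment ho' hcd)
      hw.collinear (collinear_of_mem_openSegment ho'))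

/-- A set containing `p, q` but cutting `{p, q, r, s}` in more than `{p, q}` contains one of
`r, s`, and that point is neither `p` nor `q`. -/
lemma extra_point {X : Set Pt} {p q r s : Pt} (hp : p ∈ X) (hq : q ∈ X)
    (h : X ∩ {p, q, r, s} ≠ {p, q}) :
    (r ∈ X ∧ r ≠ p ∧ r ≠ q) ∨ (s ∈ X ∧ s ≠ p ∧ s ≠ q) := by
  by_contra! hc
  apply h
  ext x
  simp only [Set.mem_inter_iff, Set.mem_insert_iff, Set.mem_singleton_iff]
  clear h
  constructor
  · rintro ⟨hx, rfl | rfl | rfl | rfl⟩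
    · exact Or.inl rfl
    · exact Or.inr rfl
    · exact or_iff_not_imp_left.2 (hc.1 hx)
    · exact or_iff_not_imp_left.2 (hc.2 hx)
  · rintro (rfl | rfl)
    · exact ⟨hp, Or.inl rfl⟩
    · exact ⟨hq, Or.inr (Or.inl rfl)⟩

lemma SegCross.swap_left {a b c d : Pt} (h : SegCross a b c d) : SegCross b a c d := by
  unfold SegCross at *
  rwa [openSegment_symm ℝ b a]

lemma SegCross.swap_right {a b c d : Pt} (h : SegCross a b c d) : SegCross a b d c := by
  unfold SegCross at *
  rwa [openSegment_symm ℝ d c]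

/-- If `(a,b)` and `(a',b')` are candidate pairs of a finite set `S` with
respect to a family `𝒳`, no three of `a, b, a', b'` are collinear, and the segments `[a,b]`,
`[a',b']` cross, then some `X ∈ 𝒳` satisfies `X ∩ {a,b,a',b'} = {a,b}` or
`X ∩ {a,b,a',b'} = {a',b'}`. -/
theorem stmt1 (S : Set Pt) (hS : S.Finite) (𝒳 : Set (Set Pt)) (a b a' b' : Pt)
    (hab : (a, b) ∈ CandPairs S 𝒳) (hab' : (a', b') ∈ CandPairs S 𝒳)
    (hcol : ∀ x ∈ ({a, b, a', b'} : Set Pt), ∀ y ∈ ({a, b, a', b'} : Set Pt),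
      ∀ z ∈ ({a, b, a', b'} : Set Pt), x ≠ y → x ≠ z → y ≠ z →
        ¬ Collinear ℝ ({x, y, z} : Set Pt))
    (hcross : SegCross a b a' b') :
    ∃ X ∈ 𝒳, X ∩ {a, b, a', b'} = {a, b} ∨ X ∩ {a, b, a', b'} = {a', b'} := by
  obtain ⟨X, hX, ⟨haS, haX⟩, ⟨hbS, hbX⟩, hne, hmin⟩ := hab
  obtain ⟨X', hX', ⟨haS', haX'⟩, ⟨hbS', hbX'⟩, hne', hmin'⟩ := hab'
  dsimp only at *
  by_contra! hno
  have hswap : ({a, b, a', b'} : Set Pt) = {a', b', a, b} := by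
    ext x
    simp only [Set.mem_insert_iff, Set.mem_singleton_iff]
    tauto
  have hx' := (hno X' hX').2
  rw [hswap] at hx'
  rcases extra_point haX hbX (hno X hX).1 with ⟨hc, h1, h2⟩ | ⟨hc, h1, h2⟩ <;>
  rcases extra_point haX' hbX' hx' with ⟨he, h3, h4⟩ | ⟨he, h3, h4⟩
  · exact false_of_cross hne' hne hcross
      (fun h => hcol _ (by simp) _ (by simp) _ (by simp) h2 hne' h)
      (hcol _ (by simp) _ (by simp) _ (by simp) h1 h2 hne)
      (hmin _ ⟨haS', hc⟩ _ ⟨hbS, hbX⟩ h2)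
      (hmin' _ ⟨haS, he⟩ _ ⟨hbS', hbX'⟩ h4)
  · exact false_of_cross hne' hne.symm hcross.swap_left
      (fun h => hcol _ (by simp) _ (by simp) _ (by simp) h1 hne' h)
      (hcol _ (by simp) _ (by simp) _ (by simp) h2 h1 hne.symm)
      (dist_comm a b ▸ hmin _ ⟨haS', hc⟩ _ ⟨haS, haX⟩ h1)
      (hmin' _ ⟨hbS, he⟩ _ ⟨hbS', hbX'⟩ h4)
  · exact false_of_cross hne'.symm hne hcross.swap_right
      (fun h => hcol _ (by simp) _ (by simp) _ (by simp) h2 hne'.symm h)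
      (hcol _ (by simp) _ (by simp) _ (by simp) h1 h2 hne)
      (hmin _ ⟨hbS', hc⟩ _ ⟨hbS, hbX⟩ h2)
      (dist_comm a' b' ▸ hmin' _ ⟨haS, he⟩ _ ⟨haS', haX'⟩ h3)
  · exact false_of_cross hne'.symm hne.symm hcross.swap_left.swap_right
      (fun h => hcol _ (by simp) _ (by simp) _ (by simp) h1 hne'.symm h)
      (hcol _ (by simp) _ (by simp) _ (by simp) h2 h1 hne.symm)
      (dist_comm a b ▸ hmin _ ⟨hbS', hc⟩ _ ⟨haS, haX⟩ h1)
      (dist_comm a' b' ▸ hmin' _ ⟨hbS, he⟩ _ ⟨haS', haX'⟩ h3)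
end
end

section
/- Let W ⊆ ℝ² be a wedge and A ⊆ ℝ² a nonempty finite set. Then there exists a point p ∈ ℝ² such that A ⊆ W_p and W_p ⊆ W_q for every q ∈ ℝ² with A ⊆ W_q (i.e., W_p is the unique smallest W-translate containing A under inclusion). Moreover, for any p ∈ ℝ², W_p is this smallest W-translate containing A if and only if A ⊆ W_p and each of the two branches of W_p has nonempty intersection with A. -/
/-!
The pair `(f₁, f₂)` is a linear isomorphism from the plane onto `ℝ × ℝ`: a
kernel vector could be added to the vertex, so uniqueness of the vertex gives injectivity, and
equality of dimensions gives surjectivity (`exists_coords`). In these coordinates wedge translates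
are quadrants, and inclusion of translates is the coordinatewise order on translation vectors
(`tr_subset_tr_iff`). The smallest translate containing `A` is therefore the one whose two
coordinates are the maxima of `f₁` and `f₂` on `A`, shifted by `c₁` and `c₂`; attaining these
maxima on `A` is the same as `A` meeting both branches.
-/

open EuclideanGeometry

noncomputable section

theorem mem_tr_iff {p x : Pt} {S : Set Pt} : x ∈ tr p S ↔ x - p ∈ S := by
  constructor
  · rintro ⟨y, hy, rfl⟩
    simpa using hy
  · intro h
    exact ⟨x - p, h, by simp⟩

theorem mem_tr_wedge_iff {f₁ f₂ : Pt →ₗ[ℝ] ℝ} {c₁ c₂ : ℝ} {p x : Pt} :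
    x ∈ tr p ({x | f₁ x ≤ c₁} ∩ {x | f₂ x ≤ c₂}) ↔ f₁ x ≤ c₁ + f₁ p ∧ f₂ x ≤ c₂ + f₂ p := by
  simp [mem_tr_iff]

/-- A single intersection point of the boundary lines makes `(f₁, f₂)` surjective onto `ℝ × ℝ`. -/
theorem exists_coords {f₁ f₂ : Pt →ₗ[ℝ] ℝ} {c₁ c₂ : ℝ}
    (hvert : ∃! v : Pt, f₁ v = c₁ ∧ f₂ v = c₂) (s t : ℝ) : ∃ p : Pt, f₁ p = s ∧ f₂ p = t := by
  obtain ⟨v, ⟨hv₁, hv₂⟩, huniq⟩ := hvert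
  have hinj : Function.Injective (f₁.prod f₂) := by
    rw [injective_iff_map_eq_zero]
    intro x hx
    have hx' : f₁ x = 0 ∧ f₂ x = 0 := by simpa using hx
    simpa using huniq (v + x) (by simp [hv₁, hv₂, hx'.1, hx'.2])
  have hsurj : Function.Surjective (f₁.prod f₂) :=
    (LinearMap.injective_iff_surjective_of_finrank_eq_finrank (by simp)).1 hinj
  obtain ⟨p, hp⟩ := hsurj (s, t)
  exact ⟨p, by simpa using hp⟩

/-- Inclusion of wedge translates is the coordinatewise order; the vertex of the smaller translate
witnesses the forward direction. -/
theorem tr_subset_tr_iff {f₁ f₂ : Pt →ₗ[ℝ] ℝ} {c₁ c₂ : ℝ}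
    (hvert : ∃! v : Pt, f₁ v = c₁ ∧ f₂ v = c₂) {p q : Pt} :
    tr p ({x | f₁ x ≤ c₁} ∩ {x | f₂ x ≤ c₂}) ⊆ tr q ({x | f₁ x ≤ c₁} ∩ {x | f₂ x ≤ c₂}) ↔
      f₁ p ≤ f₁ q ∧ f₂ p ≤ f₂ q := by
  constructor
  · intro h
    obtain ⟨v, ⟨hv₁, hv₂⟩, -⟩ := hvert
    have hmem := mem_tr_wedge_iff.1
      (h ((mem_tr_wedge_iff (x := p + v)).2 (by simp [hv₁, hv₂, add_comm])))
    simp only [map_add, hv₁, hv₂] at hmem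
    constructor <;> linarith [hmem.1, hmem.2]
  · rintro ⟨h₁, h₂⟩ x hx
    obtain ⟨hx₁, hx₂⟩ := mem_tr_wedge_iff.1 hx
    exact mem_tr_wedge_iff.2 ⟨by linarith, by linarith⟩

/-- Let `W` be a wedge (intersection of two closed halfplanes whose boundary
lines meet in exactly one point) and `A` a nonempty finite set.  Then there is a smallest
`W`-translate containing `A` under inclusion, and a translate `W_p` is this smallest translate
iff it contains `A` and both of its branches (the translates of `{f₁ = c₁} ∩ W` and
`{f₂ = c₂} ∩ W`) meet `A`. -/
theorem stmt2 (f₁ f₂ : Pt →ₗ[ℝ] ℝ) (c₁ c₂ : ℝ) (W : Set Pt)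
    (hW : W = {x | f₁ x ≤ c₁} ∩ {x | f₂ x ≤ c₂})
    (hvert : ∃! v : Pt, f₁ v = c₁ ∧ f₂ v = c₂)
    (A : Set Pt) (hfin : A.Finite) (hne : A.Nonempty) :
    (∃ p : Pt, A ⊆ tr p W ∧ ∀ q : Pt, A ⊆ tr q W → tr p W ⊆ tr q W) ∧
    (∀ p : Pt,
      (A ⊆ tr p W ∧ ∀ q : Pt, A ⊆ tr q W → tr p W ⊆ tr q W) ↔
      (A ⊆ tr p W ∧ (A ∩ tr p ({x | f₁ x = c₁} ∩ W)).Nonempty ∧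
        (A ∩ tr p ({x | f₂ x = c₂} ∩ W)).Nonempty)) := by
  subst hW
  obtain ⟨a₁, ha₁, hmax₁⟩ := Set.exists_max_image A f₁ hfin hne
  obtain ⟨a₂, ha₂, hmax₂⟩ := Set.exists_max_image A f₂ hfin hne
  obtain ⟨p₀, hp₁, hp₂⟩ := exists_coords hvert (f₁ a₁ - c₁) (f₂ a₂ - c₂)
  have hA₀ : A ⊆ tr p₀ ({x | f₁ x ≤ c₁} ∩ {x | f₂ x ≤ c₂}) := fun x hx =>
    mem_tr_wedge_iff.2 ⟨by linarith [hmax₁ x hx], by linarith [hmax₂ x hx]⟩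
  refine ⟨⟨p₀, hA₀, fun q hq => (tr_subset_tr_iff hvert).2 ?_⟩, fun p => ⟨?_, ?_⟩⟩
  · have h₁ := (mem_tr_wedge_iff.1 (hq ha₁)).1
    have h₂ := (mem_tr_wedge_iff.1 (hq ha₂)).2
    constructor <;> linarith
  · -- Comparison with `p₀` forces the maximizers `a₁`, `a₂` onto the two branches.
    rintro ⟨hA, hmin⟩
    obtain ⟨hle₁, hle₂⟩ := (tr_subset_tr_iff hvert).1 (hmin p₀ hA₀)
    have h₁ := (mem_tr_wedge_iff.1 (hA ha₁)).1
    have h₂ := (mem_tr_wedge_iff.1 (hA ha₂)).2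
    refine ⟨hA, ⟨a₁, ha₁, mem_tr_iff.2 ⟨?_, mem_tr_iff.1 (hA ha₁)⟩⟩,
      ⟨a₂, ha₂, mem_tr_iff.2 ⟨?_, mem_tr_iff.1 (hA ha₂)⟩⟩⟩
    · simp only [Set.mem_ofPred_eq, map_sub]
      linarith
    · simp only [Set.mem_ofPred_eq, map_sub]
      linarith
  · rintro ⟨hA, ⟨b₁, hb₁, hb₁'⟩, ⟨b₂, hb₂, hb₂'⟩⟩
    refine ⟨hA, fun q hq => (tr_subset_tr_iff hvert).2 ?_⟩
    have e₁ : f₁ (b₁ - p) = c₁ := (mem_tr_iff.1 hb₁').1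
    have e₂ : f₂ (b₂ - p) = c₂ := (mem_tr_iff.1 hb₂').1
    rw [map_sub] at e₁ e₂
    have h₁ := (mem_tr_wedge_iff.1 (hq hb₁)).1
    have h₂ := (mem_tr_wedge_iff.1 (hq hb₂)).2
    constructor <;> linarith
end
end

section
/- Let W ⊆ ℝ² be a wedge with angle θ and let S ⊆ ℝ² be a finite set whose pairwise distances are all distinct. Let φ = (a,b) and φ' = (a,b') be two candidate pairs in Φ(S, L_W) sharing the point a, with b ≠ b'. If φ and φ' are both steep, then the angle ∠bab' is at least θ. -/
/-! The proof works in oblique coordinates. Let `u₁`, `u₂` be unit vectors along the two branches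
of `W`, let `s`, `t` be the coordinates with respect to the basis `u₁, u₂`, and put
`c = ⟪u₁, u₂⟫ = cos θ`. Membership in a `W`-translate is then a pair of lower bounds on `s` and `t`
(`mem_tr_iff`). Steepness of `(a, b)` says that `s` and `t` change in opposite directions from `a`
to `b`, and, the shortest side of the triangle `a, p, b` being opposite its smallest angle, that
both coordinates of `b - a` exceed `|b - a|` in absolute value (`steep_coord`).

Suppose `∠ b a b' < θ`. The distances `|ab|`, `|ab'|` differ, so let `|ab| < |ab'|`. The reflection
of `b` in the line `a b'` makes an angle less than `θ` with `b' - a`, and steepness of `(a, b')`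
forces every vector making such an angle with `b' - a` to have coordinates of the same signs as
those of `b' - a`. Applied to `b - a` and to its reflection this gives `coord_bounds`: each
coordinate of `b - a` lies strictly between `0` and `2⟪b - a, b' - a⟫ / |b' - a|²` times that of
`b' - a`. Every translate containing `a` and `b'` that yields `(a, b')` as a closest pair must miss
`b`, so `b` is beyond `b'` in the coordinate in which both precede `a`. Hence every translate
containing `a` and `b` contains `b'`, and `|ab| ≤ |bb'|`, which means
`2⟪b - a, b' - a⟫ ≤ |b' - a|²`. By `coord_bounds`, `b` is then not beyond `b'`: a contradiction. -/


open EuclideanGeometry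

noncomputable section

/-- `tr p W` is the smallest `W`-translate (under inclusion) containing the set `A`. -/
def IsSmallestTrans (W A : Set Pt) (p : Pt) : Prop :=
  A ⊆ tr p W ∧ ∀ q : Pt, A ⊆ tr q W → tr p W ⊆ tr q W
/-- The pair `(a, b)` is steep for the wedge `W` with vertex `v`: letting `tr p W` be the
smallest `W`-translate containing `{a, b}` (whose vertex is `p + v`), the vertex `p + v` is not
one of `a, b` and the angle `∠ a (p+v) b` is strictly smaller than the two other angles of the
triangle. -/
def Steep (W : Set Pt) (v a b : Pt) : Prop :=
  ∃ p : Pt, IsSmallestTrans W {a, b} p ∧ (p + v) ∉ ({a, b} : Set Pt) ∧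
    ∠ a (p + v) b < ∠ (p + v) a b ∧ ∠ a (p + v) b < ∠ (p + v) b a

open scoped RealInnerProductSpace

/-! ### Oblique coordinates of a wedge -/

/-- Oblique coordinates adapted to the wedge `W` with vertex `v`: unit vectors `u₁`, `u₂` along its
branches and the coordinate functionals `s`, `t` of the basis `u₁, u₂`. -/
structure WedgeCoords (W : Set Pt) (v : Pt) (s t : Pt →ₗ[ℝ] ℝ) (u₁ u₂ : Pt) : Prop where
  norm₁ : ‖u₁‖ = 1
  norm₂ : ‖u₂‖ = 1
  s₁ : s u₁ = 1
  t₁ : t u₁ = 0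
  s₂ : s u₂ = 0
  t₂ : t u₂ = 1
  expand : ∀ x, x = s x • u₁ + t x • u₂
  mem : ∀ x, x ∈ W ↔ s v ≤ s x ∧ t v ≤ t x

variable {W : Set Pt} {v : Pt} {s t : Pt →ₗ[ℝ] ℝ} {u₁ u₂ : Pt}

/-- Exchanging the two branches. -/
lemma WedgeCoords.swap (h : WedgeCoords W v s t u₁ u₂) : WedgeCoords W v t s u₂ u₁ where
  norm₁ := h.norm₂
  norm₂ := h.norm₁
  s₁ := h.t₂
  t₁ := h.s₂
  s₂ := h.t₁
  t₂ := h.s₁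
  expand x := by rw [add_comm]; exact h.expand x
  mem x := by rw [h.mem x, and_comm]

lemma WedgeCoords.inner_eq (h : WedgeCoords W v s t u₁ u₂) (x y : Pt) :
    ⟪x, y⟫ = s x * s y + t x * t y + (s x * t y + s y * t x) * ⟪u₁, u₂⟫ := by
  conv_lhs => rw [h.expand x, h.expand y]
  have h1 : ⟪u₁, u₁⟫ = 1 := by rw [real_inner_self_eq_norm_sq, h.norm₁]; norm_num
  have h2 : ⟪u₂, u₂⟫ = 1 := by rw [real_inner_self_eq_norm_sq, h.norm₂]; norm_num
  simp only [inner_add_left, inner_add_right, real_inner_smul_left, real_inner_smul_right,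
    h1, h2, real_inner_comm u₁ u₂]
  ring

lemma WedgeCoords.inner_sq_lt_one (h : WedgeCoords W v s t u₁ u₂) : ⟪u₁, u₂⟫ ^ 2 < 1 := by
  have hne : u₂ - ⟪u₁, u₂⟫ • u₁ ≠ 0 := by
    intro h0
    have := congrArg t h0
    simp [h.t₁, h.t₂] at this
  have hpos := real_inner_self_pos.2 hne
  rw [h.inner_eq] at hpos
  simp only [map_sub, map_smul, h.s₁, h.s₂, h.t₁, h.t₂, smul_eq_mul] at hpos
  nlinarith

lemma WedgeCoords.mem_tr_iff (h : WedgeCoords W v s t u₁ u₂) (q x : Pt) :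
    x ∈ tr q W ↔ s (q + v) ≤ s x ∧ t (q + v) ≤ t x := by
  have hmem : x ∈ tr q W ↔ x - q ∈ W := by
    constructor
    · rintro ⟨y, hy, rfl⟩
      simpa using hy
    · intro hx
      exact ⟨x - q, hx, by simp⟩
  rw [hmem, h.mem, map_sub, map_sub, map_add, map_add, le_sub_iff_add_le', le_sub_iff_add_le']

/-- The vertex of the smallest translate containing a set has, in each coordinate, the minimum of
that coordinate over the set. -/
lemma WedgeCoords.smallest (h : WedgeCoords W v s t u₁ u₂) {a b p : Pt}
    (hp : IsSmallestTrans W {a, b} p) :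
    s (p + v) = min (s a) (s b) ∧ t (p + v) = min (t a) (t b) := by
  obtain ⟨hsub, hmin⟩ := hp
  have ha := (h.mem_tr_iff p a).1 (hsub (by simp))
  have hb := (h.mem_tr_iff p b).1 (hsub (by simp))
  set w : Pt := min (s a) (s b) • u₁ + min (t a) (t b) • u₂ with hw
  have hsw : s w = min (s a) (s b) := by simp [hw, h.s₁, h.s₂]
  have htw : t w = min (t a) (t b) := by simp [hw, h.t₁, h.t₂]
  have hq : ({a, b} : Set Pt) ⊆ tr (w - v) W := by
    rintro x (rfl | rfl) <;> rw [h.mem_tr_iff, sub_add_cancel, hsw, htw] <;> simp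
  have hpv := (h.mem_tr_iff (w - v) (p + v)).1
    (hmin _ hq ((h.mem_tr_iff p (p + v)).2 ⟨le_rfl, le_rfl⟩))
  rw [sub_add_cancel, hsw, htw] at hpv
  exact ⟨le_antisymm (le_min ha.1 hb.1) hpv.1, le_antisymm (le_min ha.2 hb.2) hpv.2⟩

/-! ### Steepness in coordinates -/

/-- If the angle at `p` is nonzero and strictly the smallest angle of the triangle `a, p, b`, then
`a b` is shorter than `p b`. -/
lemma dist_lt_of_angle_lt {a p b : Pt} (hne : p ≠ a) (hba : b ≠ a) (h0 : 0 < ∠ a p b)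
    (h1 : ∠ a p b < ∠ p a b) (h2 : ∠ a p b < ∠ p b a) : dist a b < dist p b := by
  have hsum := angle_add_angle_add_angle_eq_pi b hne
  have hlaw := law_sin a p b
  rw [angle_comm b a p] at hlaw hsum
  have hβ := angle_le_pi p a b
  have hsin : Real.sin (∠ a p b) < Real.sin (∠ p a b) := by
    rw [← sub_pos, Real.sin_sub_sin]
    refine mul_pos (mul_pos two_pos (Real.sin_pos_of_pos_of_lt_pi ?_ ?_))
      (Real.cos_pos_of_mem_Ioo ⟨?_, ?_⟩) <;> linarith
  have hs0 : 0 < Real.sin (∠ a p b) := Real.sin_pos_of_pos_of_lt_pi h0 (by linarith)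
  have hd : 0 < dist b a := dist_pos.2 hba
  rw [dist_comm a b]
  by_contra! hle
  nlinarith

/-- The metric content of steepness when `b - a` points into the quadrant `s > 0 > t`. -/
lemma WedgeCoords.steep_aux (h : WedgeCoords W v s t u₁ u₂) {a b P : Pt}
    (hs : s P = s a) (ht : t P = t b) (hsab : s a < s b) (htab : t b < t a)
    (h1 : ∠ a P b < ∠ P a b) (h2 : ∠ a P b < ∠ P b a) :
    ‖b - a‖ < s b - s a ∧ ‖b - a‖ < t a - t b := by
  have haP : a - P = (t a - t b) • u₂ := by
    rw [h.expand (a - P), map_sub, map_sub, hs, ht]; simp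
  have hbP : b - P = (s b - s a) • u₁ := by
    rw [h.expand (b - P), map_sub, map_sub, hs, ht]; simp
  have hang : ∠ a P b = InnerProductGeometry.angle u₂ u₁ := by
    rw [EuclideanGeometry.angle, vsub_eq_sub, vsub_eq_sub, haP, hbP,
      InnerProductGeometry.angle_smul_left_of_pos _ _ (by linarith),
      InnerProductGeometry.angle_smul_right_of_pos _ _ (by linarith)]
  have h0 : 0 < ∠ a P b := by
    refine lt_of_le_of_ne (angle_nonneg _ _ _) fun h0 => ?_
    have hcos := InnerProductGeometry.cos_angle u₂ u₁
    rw [← hang, ← h0, h.norm₁, h.norm₂, real_inner_comm] at hcos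
    have := h.inner_sq_lt_one
    norm_num at hcos
    rw [← hcos] at this
    norm_num at this
  have hPa : P ≠ a := by rintro rfl; linarith
  have hPb : P ≠ b := by rintro rfl; linarith
  have hba : b ≠ a := by rintro rfl; linarith
  have d1 := dist_lt_of_angle_lt hPa hba h0 h1 h2
  rw [angle_comm] at h0 h1 h2
  have d2 := dist_lt_of_angle_lt hPb hba.symm h0 h2 h1
  rw [dist_comm a b, dist_comm P b, dist_eq_norm, dist_eq_norm, hbP, norm_smul, h.norm₁, mul_one,
    Real.norm_of_nonneg (by linarith)] at d1
  rw [dist_comm P a, dist_eq_norm, dist_eq_norm, haP, norm_smul, h.norm₂, mul_one,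
    Real.norm_of_nonneg (by linarith)] at d2
  exact ⟨d1, d2⟩

/-- Steepness in coordinates. -/
lemma WedgeCoords.steep_coord (h : WedgeCoords W v s t u₁ u₂) {a b : Pt} (hst : Steep W v a b) :
    s (b - a) * t (b - a) < 0 ∧ ⟪b - a, b - a⟫ < s (b - a) ^ 2 ∧
      ⟪b - a, b - a⟫ < t (b - a) ^ 2 := by
  obtain ⟨p, hp, hnot, h1, h2⟩ := hst
  obtain ⟨hs, ht⟩ := h.smallest hp
  have hext : ∀ x y : Pt, s x = s y → t x = t y → x = y := fun x y e₁ e₂ => by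
    rw [h.expand x, h.expand y, e₁, e₂]
  have hna : p + v ≠ a := fun e => hnot (by simp [e])
  have hnb : p + v ≠ b := fun e => hnot (by simp [e])
  have hn := norm_nonneg (b - a)
  rw [real_inner_self_eq_norm_sq, map_sub, map_sub]
  rcases le_or_gt (s a) (s b) with hsab | hsab
  · rw [min_eq_left hsab] at hs
    have htab : t b < t a := by
      by_contra! hle
      exact hna (hext _ _ hs (by rw [ht, min_eq_left hle]))
    rw [min_eq_right htab.le] at ht
    have hlt : s a < s b := lt_of_le_of_ne hsab fun e => hnb (hext _ _ (hs.trans e) ht)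
    obtain ⟨e1, e2⟩ := h.steep_aux hs ht hlt htab h1 h2
    refine ⟨?_, ?_, ?_⟩ <;> nlinarith
  · rw [min_eq_right hsab.le] at hs
    have htab : t a < t b := by
      by_contra! hle
      exact hnb (hext _ _ hs (by rw [ht, min_eq_right hle]))
    rw [min_eq_left htab.le] at ht
    obtain ⟨e1, e2⟩ := h.swap.steep_aux ht hs htab hsab h1 h2
    refine ⟨?_, ?_, ?_⟩ <;> nlinarith

/-! ### Two steep candidate pairs at a small angle -/

/-- Let `x = (p, q)` and `y = (s, t)` in oblique coordinates, with `N = |x|²`, `M = |y|²`,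
`P = ⟪x, y⟫`. If `|y| < |t|` and the line of `x` makes an acute angle less than `arccos |c|` with
that of `y`, then `q M` differs from `P t` by less than `|P t|`. Equivalently, `q` lies strictly
between `0` and `2 P t / M`, which is the sum of the second coordinates of `x` and of its reflection
in the line of `y`. -/
lemma coord_bounds {c p q s t N M P : ℝ} (hc1 : c ^ 2 < 1)
    (hN : N = p ^ 2 + q ^ 2 + 2 * p * q * c) (hM : M = s ^ 2 + t ^ 2 + 2 * s * t * c)
    (hP : P = p * s + q * t + (p * t + s * q) * c) (hPc : N * M * c ^ 2 < P ^ 2)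
    (hMt : M < t ^ 2) : (q * M - P * t) ^ 2 < (P * t) ^ 2 := by
  set K := q * s - p * t with hK
  have hid : q * M - P * t = K * (s + t * c) := by rw [hM, hP, hK]; ring
  -- Lagrange's identity for the Gram determinant
  have hgram : N * M - P ^ 2 = K ^ 2 * (1 - c ^ 2) := by rw [hM, hP, hN, hK]; ring
  have hσ : 0 < 1 - c ^ 2 := by linarith
  have hKP : K ^ 2 * c ^ 2 < P ^ 2 := by
    have : K ^ 2 * c ^ 2 * (1 - c ^ 2) < P ^ 2 * (1 - c ^ 2) := by nlinarith
    exact lt_of_mul_lt_mul_right this hσ.le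
  have hst : (s + t * c) ^ 2 < t ^ 2 * c ^ 2 := by rw [hM] at hMt; nlinarith
  have ht : 0 < t ^ 2 := by nlinarith [sq_nonneg (s + t * c), sq_nonneg c, sq_nonneg t]
  rw [hid, mul_pow, mul_pow]
  calc K ^ 2 * (s + t * c) ^ 2 ≤ K ^ 2 * (t ^ 2 * c ^ 2) := by gcongr
    _ = K ^ 2 * c ^ 2 * t ^ 2 := by ring
    _ < P ^ 2 * t ^ 2 := by gcongr

/-- The candidate pairs `(a, b)` and `(a, b')`, with `b` the nearer partner, contradict the bounds of
`coord_bounds` on both coordinates of `b - a`, when `b' - a` points into the quadrant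
`s > 0 > t`. -/
lemma WedgeCoords.no_close (h : WedgeCoords W v s t u₁ u₂) {S : Set Pt} {a b b' q q' : Pt}
    (hbb' : b ≠ b')
    (hq : IsClosestPair (S ∩ tr q W) a b) (hq' : IsClosestPair (S ∩ tr q' W) a b')
    (hlt : dist a b < dist a b') (hs' : 0 < s (b' - a)) (ht' : t (b' - a) < 0)
    (hM : 0 < ⟪b' - a, b' - a⟫)
    (hbs : (s (b - a) * ⟪b' - a, b' - a⟫ - ⟪b - a, b' - a⟫ * s (b' - a)) ^ 2 <
      (⟪b - a, b' - a⟫ * s (b' - a)) ^ 2)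
    (hbt : (t (b - a) * ⟪b' - a, b' - a⟫ - ⟪b - a, b' - a⟫ * t (b' - a)) ^ 2 <
      (⟪b - a, b' - a⟫ * t (b' - a)) ^ 2)
    (hP : 0 < ⟪b - a, b' - a⟫) : False := by
  obtain ⟨⟨haS, haq⟩, ⟨hbS, hbq⟩, hab, hmin⟩ := hq
  obtain ⟨⟨-, haq'⟩, ⟨hbS', hbq'⟩, -, hmin'⟩ := hq'
  rw [h.mem_tr_iff] at haq hbq haq' hbq'
  rw [sq_lt_sq, abs_of_pos (mul_pos hP hs'), abs_lt] at hbs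
  rw [sq_lt_sq, abs_of_neg (mul_neg_of_pos_of_neg hP ht'), abs_lt] at hbt
  have hs0 : 0 < s (b - a) := by
    by_contra! hle
    nlinarith
  have ht1 := hbt.1
  rw [map_sub] at hs' ht' hs0
  have htlt : t b < t b' := by
    by_contra! hle
    have hb : b ∈ S ∩ tr q' W := by
      refine ⟨hbS, (h.mem_tr_iff _ _).2 ⟨?_, ?_⟩⟩ <;> linarith
    exact absurd (hmin' a ⟨haS, (h.mem_tr_iff _ _).2 haq'⟩ b hb hab) (not_le.2 hlt)
  have hb' : b' ∈ S ∩ tr q W := by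
    refine ⟨hbS', (h.mem_tr_iff _ _).2 ⟨?_, ?_⟩⟩ <;> linarith
  have hle := hmin b ⟨hbS, (h.mem_tr_iff _ _).2 hbq⟩ b' hb' hbb'
  have hPM : 2 * ⟪b - a, b' - a⟫ ≤ ⟪b' - a, b' - a⟫ := by
    have hsub : b - b' = (b - a) - (b' - a) := by abel
    rw [dist_comm, dist_eq_norm, dist_eq_norm, hsub] at hle
    have hsq := pow_le_pow_left₀ (norm_nonneg _) hle 2
    rw [norm_sub_sq_real (b - a)] at hsq
    rw [real_inner_self_eq_norm_sq]
    linarith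
  have hprod : 2 * ⟪b - a, b' - a⟫ * t (b' - a) < t (b - a) * ⟪b' - a, b' - a⟫ := by linarith
  rw [map_sub, map_sub] at hprod
  nlinarith

/-- The bound on the angle, the farther of the two partners of `a` being `b'`. -/
lemma WedgeCoords.angle_bound (h : WedgeCoords W v s t u₁ u₂) {S : Set Pt} {a b b' : Pt} {θ : ℝ}
    (hθ : InnerProductGeometry.angle u₂ u₁ = θ) (hbb' : b ≠ b')
    (hφ : (a, b) ∈ CandPairs S (Translates W)) (hφ' : (a, b') ∈ CandPairs S (Translates W))
    (hsteep' : Steep W v a b') (hlt : dist a b < dist a b') : θ ≤ ∠ b a b' := by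
  obtain ⟨X, ⟨q, rfl⟩, hq⟩ := hφ
  obtain ⟨X', ⟨q', rfl⟩, hq'⟩ := hφ'
  obtain ⟨hst, hMs, hMt⟩ := h.steep_coord hsteep'
  have hab : b - a ≠ 0 := sub_ne_zero.2 hq.2.2.1.symm
  have hab' : b' - a ≠ 0 := sub_ne_zero.2 hq'.2.2.1.symm
  have hcosθ : Real.cos θ = ⟪u₁, u₂⟫ := by
    rw [← hθ, InnerProductGeometry.cos_angle, h.norm₁, h.norm₂, real_inner_comm]; norm_num
  have hM : 0 < ⟪b' - a, b' - a⟫ := real_inner_self_pos.2 hab'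
  have hMeq := h.inner_eq (b' - a) (b' - a)
  have hNeq := h.inner_eq (b - a) (b - a)
  have hPeq := h.inner_eq (b - a) (b' - a)
  have hc1 := h.inner_sq_lt_one
  have hc : 0 < ⟪u₁, u₂⟫ := by
    by_contra! hle
    nlinarith [sq_nonneg (s (b' - a)), mul_nonneg_of_nonpos_of_nonpos hst.le hle]
  by_contra! hang
  have hcos : ⟪u₁, u₂⟫ < Real.cos (∠ b a b') := by
    rw [← hcosθ]
    exact Real.cos_lt_cos_of_nonneg_of_le_pi (angle_nonneg _ _ _)
      (hθ ▸ InnerProductGeometry.angle_le_pi _ _) hang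
  rw [EuclideanGeometry.angle, vsub_eq_sub, vsub_eq_sub, InnerProductGeometry.cos_angle,
    lt_div_iff₀ (mul_pos (norm_pos_iff.2 hab) (norm_pos_iff.2 hab'))] at hcos
  have hnn : 0 < ⟪u₁, u₂⟫ * (‖b - a‖ * ‖b' - a‖) :=
    mul_pos hc (mul_pos (norm_pos_iff.2 hab) (norm_pos_iff.2 hab'))
  have hP : 0 < ⟪b - a, b' - a⟫ := hnn.trans hcos
  have hPc : ⟪b - a, b - a⟫ * ⟪b' - a, b' - a⟫ * ⟪u₁, u₂⟫ ^ 2 < ⟪b - a, b' - a⟫ ^ 2 := by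
    have := pow_lt_pow_left₀ hcos hnn.le two_ne_zero
    rw [real_inner_self_eq_norm_sq, real_inner_self_eq_norm_sq]
    nlinarith
  have hbt := coord_bounds hc1 (hNeq.trans (by ring)) (hMeq.trans (by ring)) hPeq hPc hMt
  have hbs := coord_bounds (p := t (b - a)) (q := s (b - a)) (s := t (b' - a)) (t := s (b' - a))
    hc1 (hNeq.trans (by ring)) (hMeq.trans (by ring)) (hPeq.trans (by ring)) hPc hMs
  rcases mul_neg_iff.1 hst with ⟨h1, h2⟩ | ⟨h1, h2⟩
  · exact h.no_close hbb' hq hq' hlt h1 h2 hM hbs hbt hP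
  · exact h.swap.no_close hbb' hq hq' hlt h2 h1 hM hbt hbs hP

/-! ### Existence of the coordinates and conclusion -/

/-- Two halfplanes whose boundary lines meet in exactly one point admit adapted coordinates, and the
angle of the wedge is the angle between the two basis vectors. -/
lemma exists_wedgeCoords (f₁ f₂ : Pt →ₗ[ℝ] ℝ) (c₁ c₂ : ℝ) (v : Pt) (W : Set Pt) (θ : ℝ)
    (hW : W = {x | f₁ x ≤ c₁} ∩ {x | f₂ x ≤ c₂})
    (hv : f₁ v = c₁ ∧ f₂ v = c₂)
    (huniq : ∀ w : Pt, f₁ w = c₁ → f₂ w = c₂ → w = v)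
    (hθ : ∀ x₁ ∈ {x | f₁ x = c₁} ∩ W, ∀ x₂ ∈ {x | f₂ x = c₂} ∩ W,
      x₁ ≠ v → x₂ ≠ v → ∠ x₁ v x₂ = θ) :
    ∃ (s t : Pt →ₗ[ℝ] ℝ) (u₁ u₂ : Pt), WedgeCoords W v s t u₁ u₂ ∧
      InnerProductGeometry.angle u₂ u₁ = θ := by
  have hker : ∀ x, f₁ x = 0 → f₂ x = 0 → x = 0 := fun x h1 h2 => by
    simpa using huniq (x + v) (by simp [h1, hv.1]) (by simp [h2, hv.2])
  have hinj : Function.Injective (f₁.prod f₂) := by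
    rw [injective_iff_map_eq_zero]
    intro x hx
    exact hker x (congrArg Prod.fst hx) (congrArg Prod.snd hx)
  have hsurj := (LinearMap.injective_iff_surjective_of_finrank_eq_finrank (by simp)).1 hinj
  obtain ⟨w₁, hw₁⟩ := hsurj (-1, 0)
  obtain ⟨w₂, hw₂⟩ := hsurj (0, -1)
  replace hw₁ : f₁ w₁ = -1 ∧ f₂ w₁ = 0 := ⟨congrArg Prod.fst hw₁, congrArg Prod.snd hw₁⟩
  replace hw₂ : f₁ w₂ = 0 ∧ f₂ w₂ = -1 := ⟨congrArg Prod.fst hw₂, congrArg Prod.snd hw₂⟩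
  have hn₁ : 0 < ‖w₁‖ := norm_pos_iff.2 (by rintro rfl; simp at hw₁)
  have hn₂ : 0 < ‖w₂‖ := norm_pos_iff.2 (by rintro rfl; simp at hw₂)
  refine ⟨-‖w₁‖ • f₁, -‖w₂‖ • f₂, ‖w₁‖⁻¹ • w₁, ‖w₂‖⁻¹ • w₂, ?_, ?_⟩
  · constructor
    · simp [norm_smul, hn₁.ne']
    · simp [norm_smul, hn₂.ne']
    · simp [hw₁.1, hn₁.ne']
    · simp [hw₁.2]
    · simp [hw₂.1]
    · simp [hw₂.2, hn₂.ne']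
    · intro x
      rw [← sub_eq_zero]
      apply hker
      · simp [hw₁.1, hw₂.1]
        field_simp
        simp
      · simp [hw₁.2, hw₂.2]
        field_simp
        simp
    · intro x
      simp [hW, hv.1, hv.2, hn₁, hn₂]
  · have := hθ (v + w₂) (by simp [hW, hv.1, hv.2, hw₂.1, hw₂.2])
      (v + w₁) (by simp [hW, hv.1, hv.2, hw₁.1, hw₁.2])
      (by simpa using norm_pos_iff.1 hn₂) (by simpa using norm_pos_iff.1 hn₁)
    rw [InnerProductGeometry.angle_smul_left_of_pos _ _ (inv_pos.2 hn₂),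
      InnerProductGeometry.angle_smul_right_of_pos _ _ (inv_pos.2 hn₁), ← this]
    simp [EuclideanGeometry.angle]

/-- Let `W` be a wedge with vertex `v` and angle `θ` (the angle between the two
branches at the vertex), and `S` a finite set with distinct pairwise distances.  If
`(a, b), (a, b') ∈ Φ(S, L_W)` with `b ≠ b'` are both steep, then `∠ b a b' ≥ θ`. -/
theorem stmt4 (f₁ f₂ : Pt →ₗ[ℝ] ℝ) (c₁ c₂ : ℝ) (v : Pt) (W : Set Pt) (θ : ℝ)
    (hW : W = {x | f₁ x ≤ c₁} ∩ {x | f₂ x ≤ c₂})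
    (hv : f₁ v = c₁ ∧ f₂ v = c₂)
    (huniq : ∀ w : Pt, f₁ w = c₁ → f₂ w = c₂ → w = v)
    (hθ : ∀ x₁ ∈ {x | f₁ x = c₁} ∩ W, ∀ x₂ ∈ {x | f₂ x = c₂} ∩ W,
      x₁ ≠ v → x₂ ≠ v → ∠ x₁ v x₂ = θ)
    (S : Set Pt) (hS : S.Finite) (hdd : DistinctDists S)
    (a b b' : Pt) (hbb' : b ≠ b')
    (hφ : (a, b) ∈ CandPairs S (Translates W))
    (hφ' : (a, b') ∈ CandPairs S (Translates W))
    (hsteep : Steep W v a b) (hsteep' : Steep W v a b') :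
    θ ≤ ∠ b a b' := by
  obtain ⟨s, t, u₁, u₂, h, hang⟩ := exists_wedgeCoords f₁ f₂ c₁ c₂ v W θ hW hv huniq hθ
  have hφ₀ := hφ
  have hφ₀' := hφ'
  obtain ⟨-, -, ⟨haS, -⟩, ⟨hbS, -⟩, hab, -⟩ := hφ₀
  obtain ⟨-, -, -, ⟨hbS', -⟩, hab', -⟩ := hφ₀'
  rcases lt_trichotomy (dist a b) (dist a b') with hlt | heq | hlt
  · exact h.angle_bound hang hbb' hφ hφ' hsteep' hlt
  · have hset := hdd a haS b hbS a haS b' hbS' hab hab' heq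
    have hb : b ∈ ({a, b'} : Set Pt) := hset ▸ (by simp : b ∈ ({a, b} : Set Pt))
    rcases hb with e | e
    · exact absurd e.symm hab
    · exact absurd e hbb'
  · rw [angle_comm]
    exact h.angle_bound hang hbb'.symm hφ' hφ hsteep hlt
end
end

section
/- For every wedge W ⊆ ℝ² with angle θ there exists a constant c > 0, depending only on θ, such that for every finite set S ⊆ ℝ² whose pairwise distances are all distinct and in which no three points are collinear, the number of candidate pairs satisfies |Φ(S, L_W)| ≤ c·|S|. -/
/-!
The wedge is `{f₁ ≤ c₁} ∩ {f₂ ≤ c₂}`, so its translates have the form `{f₁ ≤ s} ∩ {f₂ ≤ t}`. A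
candidate pair `(a, b)` is therefore already a closest pair in the smallest such region containing
`a` and `b`, namely `{f₁ ≤ max (f₁ a) (f₁ b), f₂ ≤ max (f₂ a) (f₂ b)}`.

* If one point, say `a`, attains both maxima, then `b` is the nearest neighbour of `a` in that
  region, which depends on `a` only; as distances are distinct, `a` determines `b`.
* Otherwise, up to swapping, `f₁ b < f₁ a` and `f₂ a < f₂ b`. These pairs are divided into `K`
  classes in which the directions of `b - a` differ by less than a small `δ`, with `K` and `δ`
  depending only on `θ`. Suppose that in its class `(a, b)` has a rival `(a, b')` with
  `f₂ b ≤ f₂ b'`. The region of `(a, b')` contains `b`, so `|ab'| ≤ |ab|` and `|ab'| ≤ |bb'|`; since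
  the directions almost agree, `|ab'|` is at most about `|ab| / 2`. As
  `f₂ (b - a) ≤ f₂ (b' - a)`, the value of `f₂` on the unit direction of `b - a` is `O(δ)`
  (`small_of_rival`). A rival `(a', b)` with `f₁ a ≤ f₁ a'` gives the same bound for `f₁`. For
  small `δ` both cannot happen, because no unit vector is almost parallel to both bounding lines
  (`norm_le_of_both`, `det_sq`). So each pair of a class is determined inside it by `a` or by `b`,
  and a class has at most `2 |S|` pairs.

The total is at most `(2 + 4K) |S|`.
-/

open EuclideanGeometry

noncomputable section

/-- The translate-free form of a candidate pair: `(a, b)` is a closest pair of `S` inside the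
smallest region `{f₁ ≤ s} ∩ {f₂ ≤ t}` that contains both `a` and `b`. -/
def MinPair (f₁ f₂ : Pt →ₗ[ℝ] ℝ) (S : Set Pt) (a b : Pt) : Prop :=
  IsClosestPair (S ∩ {x | f₁ x ≤ max (f₁ a) (f₁ b) ∧ f₂ x ≤ max (f₂ a) (f₂ b)}) a b

/-- The direction of a vector, as a unit vector; it is `0` at `0`. -/
def dirv (X : Pt) : Pt := ‖X‖⁻¹ • X

lemma minPair_of_cand {f₁ f₂ : Pt →ₗ[ℝ] ℝ} {c₁ c₂ : ℝ} {S : Set Pt} {q : Pt × Pt}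
    (h : q ∈ CandPairs S (Translates ({x | f₁ x ≤ c₁} ∩ {x | f₂ x ≤ c₂}))) :
    MinPair f₁ f₂ S q.1 q.2 := by
  obtain ⟨X, ⟨p, rfl⟩, ha, hb, hne, hmin⟩ := h
  have key : ∀ x, x ∈ tr p ({x | f₁ x ≤ c₁} ∩ {x | f₂ x ≤ c₂}) ↔
      f₁ x ≤ c₁ + f₁ p ∧ f₂ x ≤ c₂ + f₂ p := by
    intro x
    constructor
    · rintro ⟨y, ⟨h1, h2⟩, rfl⟩
      simp only [Set.mem_ofPred_eq] at h1 h2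
      simp only [map_add]
      constructor <;> linarith
    · rintro ⟨h1, h2⟩
      refine ⟨x - p, ⟨?_, ?_⟩, by simp⟩
      · simp only [Set.mem_ofPred_eq, map_sub]; linarith
      · simp only [Set.mem_ofPred_eq, map_sub]; linarith
  have ha' := (key _).1 ha.2
  have hb' := (key _).1 hb.2
  have sub : ∀ x, x ∈ S ∩ {x | f₁ x ≤ max (f₁ q.1) (f₁ q.2) ∧ f₂ x ≤ max (f₂ q.1) (f₂ q.2)} →
      x ∈ S ∩ tr p ({x | f₁ x ≤ c₁} ∩ {x | f₂ x ≤ c₂}) := by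
    rintro x ⟨hx, h1, h2⟩
    exact ⟨hx, (key x).2 ⟨h1.trans (max_le ha'.1 hb'.1), h2.trans (max_le ha'.2 hb'.2)⟩⟩
  exact ⟨⟨ha.1, le_max_left _ _, le_max_left _ _⟩, ⟨hb.1, le_max_right _ _, le_max_right _ _⟩, hne,
    fun x hx y hy => hmin x (sub x hx) y (sub y hy)⟩

lemma MinPair.symm {f₁ f₂ : Pt →ₗ[ℝ] ℝ} {S : Set Pt} {a b : Pt} (h : MinPair f₁ f₂ S a b) :
    MinPair f₁ f₂ S b a := by
  unfold MinPair at *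
  rw [max_comm (f₁ b), max_comm (f₂ b)]
  obtain ⟨ha, hb, hne, hmin⟩ := h
  refine ⟨hb, ha, hne.symm, fun x hx y hy hxy => ?_⟩
  rw [dist_comm]
  exact hmin x hx y hy hxy

/-- If `Y` is no longer than `X` and than `X - Y`, and has almost the direction of `X`, then `Y` is
at most about half as long as `X`; so `g X ≤ g Y` forces `g` to be small on the direction
of `X`. -/
lemma small_of_rival (g : Pt →ₗ[ℝ] ℝ) (L δ : ℝ) (hL : ∀ w, |g w| ≤ L * ‖w‖) (hL0 : 0 ≤ L)
    (hδ0 : 0 ≤ δ) (hδ : δ ≤ 1 / 2) (X Y : Pt) (hX : X ≠ 0) (hY : Y ≠ 0) (hYX : ‖Y‖ ≤ ‖X‖)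
    (hXY : ‖Y‖ ≤ ‖X - Y‖) (h0 : 0 < g X) (hg : g X ≤ g Y)
    (hd : ‖dirv X - dirv Y‖ ≤ δ) : |g X| ≤ 2 * δ * L * ‖X‖ := by
  have hx : 0 < ‖X‖ := norm_pos_iff.2 hX
  have hy : 0 < ‖Y‖ := norm_pos_iff.2 hY
  have eX : X = ‖X‖ • dirv X := by
    rw [dirv, smul_smul, mul_inv_cancel₀ hx.ne', one_smul]
  have eY : Y = ‖Y‖ • dirv Y := by
    rw [dirv, smul_smul, mul_inv_cancel₀ hy.ne', one_smul]
  have nX : ‖dirv X‖ = 1 := by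
    rw [dirv, norm_smul, norm_inv, norm_norm, inv_mul_cancel₀ hx.ne']
  set u := dirv X
  set w := dirv Y
  have gX : g X = ‖X‖ * g u := by
    conv_lhs => rw [eX]
    simp
  have gY : g Y = ‖Y‖ * g w := by
    conv_lhs => rw [eY]
    simp
  have half : ‖X - Y‖ ≤ (‖X‖ - ‖Y‖) + ‖Y‖ * δ := by
    have e : X - Y = (‖X‖ - ‖Y‖) • u + ‖Y‖ • (u - w) := by
      conv_lhs => rw [eX, eY]
      module
    rw [e]
    refine (norm_add_le _ _).trans ?_
    rw [norm_smul, norm_smul, nX, Real.norm_of_nonneg (sub_nonneg.2 hYX),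
      Real.norm_of_nonneg hy.le, mul_one]
    gcongr
  have hgu : 0 < g u := by
    rw [gX] at h0
    exact pos_of_mul_pos_right h0 hx.le
  have gw : g w ≤ g u + L * δ := by
    have h1 := (hL (u - w)).trans (mul_le_mul_of_nonneg_left hd hL0)
    rw [map_sub, abs_le] at h1
    linarith [h1.1]
  have h2 : (2 - δ) * g u ≤ g w := by
    have h3 : ‖Y‖ * ((2 - δ) * g u) ≤ ‖Y‖ * g w := by
      rw [← gY]
      refine le_trans ?_ hg
      rw [gX]
      nlinarith
    exact le_of_mul_le_mul_left h3 hy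
  have h4 : g u ≤ 2 * δ * L := by
    nlinarith
  rw [abs_of_pos h0, gX]
  nlinarith

lemma apply_eq (f : Pt →ₗ[ℝ] ℝ) :
    ∃ α β : ℝ, ∀ w : Pt, f w = α * w 0 + β * w 1 := by
  refine ⟨f !₂[1, 0], f !₂[0, 1], fun w => ?_⟩
  have : w = w 0 • !₂[(1 : ℝ), 0] + w 1 • !₂[(0 : ℝ), 1] := by
    ext i
    fin_cases i <;> simp
  conv_lhs => rw [this]
  simp
  ring

lemma norm_eq_sqrt (w : Pt) : ‖w‖ = √(w 0 ^ 2 + w 1 ^ 2) := by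
  rw [EuclideanSpace.norm_eq]
  simp

lemma apply_le {α β L : ℝ} (hL0 : 0 ≤ L) (hL : L ^ 2 = α ^ 2 + β ^ 2) (w : Pt) :
    |α * w 0 + β * w 1| ≤ L * ‖w‖ := by
  apply abs_le_of_sq_le_sq _ (by positivity)
  rw [mul_pow, hL, norm_eq_sqrt, Real.sq_sqrt (by positivity)]
  nlinarith [sq_nonneg (α * w 1 - β * w 0)]

/-- Cramer's rule: a vector on which two independent functionals are small is small. -/
lemma norm_le_of_both {α₁ β₁ α₂ β₂ L₁ L₂ η : ℝ} (hL₁ : 0 ≤ L₁) (hL₂ : 0 ≤ L₂)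
    (h₁ : L₁ ^ 2 = α₁ ^ 2 + β₁ ^ 2) (h₂ : L₂ ^ 2 = α₂ ^ 2 + β₂ ^ 2) (w : Pt)
    (k₁ : |α₁ * w 0 + β₁ * w 1| ≤ η * L₁ * ‖w‖) (k₂ : |α₂ * w 0 + β₂ * w 1| ≤ η * L₂ * ‖w‖) :
    |α₁ * β₂ - α₂ * β₁| * ‖w‖ ≤ 2 * η * (L₁ * L₂) * ‖w‖ := by
  have e : (α₁ * β₂ - α₂ * β₁) • w = (α₁ * w 0 + β₁ * w 1) • !₂[β₂, -α₂]
      + (α₂ * w 0 + β₂ * w 1) • !₂[-β₁, α₁] := by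
    ext i
    fin_cases i <;> simp <;> ring
  have n₁ : ‖(!₂[-β₁, α₁] : Pt)‖ = L₁ := by
    rw [norm_eq_sqrt, ← Real.sqrt_sq hL₁, h₁]
    congr 1
    simp
    ring
  have n₂ : ‖(!₂[β₂, -α₂] : Pt)‖ = L₂ := by
    rw [norm_eq_sqrt, ← Real.sqrt_sq hL₂, h₂]
    congr 1
    simp
    ring
  have := norm_add_le ((α₁ * w 0 + β₁ * w 1) • (!₂[β₂, -α₂] : Pt))
    ((α₂ * w 0 + β₂ * w 1) • (!₂[-β₁, α₁] : Pt))
  rw [← e, norm_smul, norm_smul, norm_smul, n₁, n₂] at this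
  simp only [Real.norm_eq_abs] at this
  have a1 := mul_le_mul_of_nonneg_right k₁ hL₂
  have a2 := mul_le_mul_of_nonneg_right k₂ hL₁
  linarith

/-- The determinant of the two normal vectors of a wedge is, up to their lengths, the sine of the
wedge angle. -/
lemma det_sq {θ : ℝ} {f₁ f₂ : Pt →ₗ[ℝ] ℝ} {c₁ c₂ : ℝ} {v : Pt} {α₁ β₁ α₂ β₂ L₁ L₂ : ℝ}
    (e₁ : ∀ w : Pt, f₁ w = α₁ * w 0 + β₁ * w 1) (e₂ : ∀ w : Pt, f₂ w = α₂ * w 0 + β₂ * w 1)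
    (hL₁ : 0 ≤ L₁) (hL₂ : 0 ≤ L₂)
    (h₁ : L₁ ^ 2 = α₁ ^ 2 + β₁ ^ 2) (h₂ : L₂ ^ 2 = α₂ ^ 2 + β₂ ^ 2)
    (hv : f₁ v = c₁ ∧ f₂ v = c₂) (hD : α₁ * β₂ - α₂ * β₁ ≠ 0)
    (hθ : ∀ x₁ ∈ {x | f₁ x = c₁} ∩ ({x | f₁ x ≤ c₁} ∩ {x | f₂ x ≤ c₂}),
      ∀ x₂ ∈ {x | f₂ x = c₂} ∩ ({x | f₁ x ≤ c₁} ∩ {x | f₂ x ≤ c₂}),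
          x₁ ≠ v → x₂ ≠ v → ∠ x₁ v x₂ = θ) :
    (α₁ * β₂ - α₂ * β₁) ^ 2 = Real.sin θ ^ 2 * (L₁ * L₂) ^ 2 := by
  set D := α₁ * β₂ - α₂ * β₁ with hDdef
  -- The factor `D` selects, on each bounding line, the direction pointing into the wedge.
  set y₁ : Pt := !₂[D * β₁, -(D * α₁)] with hy₁
  set y₂ : Pt := !₂[-(D * β₂), D * α₂] with hy₂
  have n₁ : ‖y₁‖ = |D| * L₁ := by
    rw [norm_eq_sqrt, ← Real.sqrt_sq (by positivity : 0 ≤ |D| * L₁), mul_pow, h₁, sq_abs]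
    congr 1
    simp [hy₁]
    ring
  have n₂ : ‖y₂‖ = |D| * L₂ := by
    rw [norm_eq_sqrt, ← Real.sqrt_sq (by positivity : 0 ≤ |D| * L₂), mul_pow, h₂, sq_abs]
    congr 1
    simp [hy₂]
    ring
  have L₁0 : L₁ ≠ 0 := by
    rintro rfl
    have h3 : α₁ = 0 := by nlinarith
    have h4 : β₁ = 0 := by nlinarith
    exact hD (by rw [hDdef, h3, h4]; ring)
  have L₂0 : L₂ ≠ 0 := by
    rintro rfl
    have h3 : α₂ = 0 := by nlinarith
    have h4 : β₂ = 0 := by nlinarith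
    exact hD (by rw [hDdef, h3, h4]; ring)
  have y₁0 : y₁ ≠ 0 := by
    rw [← norm_pos_iff, n₁]; positivity
  have y₂0 : y₂ ≠ 0 := by
    rw [← norm_pos_iff, n₂]; positivity
  have f11 : f₁ y₁ = 0 := by rw [e₁]; simp [hy₁]; ring
  have f21 : f₂ y₁ = -D ^ 2 := by rw [e₂]; simp [hy₁]; rw [hDdef]; ring
  have f12 : f₁ y₂ = -D ^ 2 := by rw [e₁]; simp [hy₂]; rw [hDdef]; ring
  have f22 : f₂ y₂ = 0 := by rw [e₂]; simp [hy₂]; ring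
  have ang := hθ (y₁ + v)
    ⟨by simp [f11, hv.1], by simp [f11, hv.1], by simp [f21, hv.2, sq_nonneg]⟩ (y₂ + v)
    ⟨by simp [f22, hv.2], by simp [f12, hv.1, sq_nonneg], by simp [f22, hv.2]⟩
    (by simpa using y₁0) (by simpa using y₂0)
  rw [EuclideanGeometry.angle] at ang
  simp only [vsub_eq_sub, add_sub_cancel_right] at ang
  have hc := InnerProductGeometry.cos_angle_mul_norm_mul_norm y₁ y₂
  rw [ang, n₁, n₂] at hc
  have hi : inner ℝ y₁ y₂ = -(D ^ 2 * (α₁ * α₂ + β₁ * β₂)) := by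
    simp [hy₁, hy₂, PiLp.inner_apply, Fin.sum_univ_two]
    ring
  rw [hi] at hc
  have hD2 : D ^ 2 ≠ 0 := pow_ne_zero 2 hD
  have hc' : Real.cos θ * (L₁ * L₂) = -(α₁ * α₂ + β₁ * β₂) := by
    apply mul_left_cancel₀ hD2
    rw [← sq_abs D] at hc ⊢
    linarith
  have hc2 : Real.cos θ ^ 2 * (L₁ * L₂) ^ 2 = (α₁ * α₂ + β₁ * β₂) ^ 2 := by
    rw [← mul_pow, hc', neg_sq]
  rw [Real.sin_sq, sub_mul, hc2, mul_pow, h₁, h₂, hDdef]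
  ring

lemma ncard_le_fst {S : Set Pt} (hS : S.Finite) (A : Set (Pt × Pt)) (hA : ∀ q ∈ A, q.1 ∈ S)
    (h : ∀ a b b', (a, b) ∈ A → (a, b') ∈ A → b = b') : A.ncard ≤ S.ncard := by
  refine Set.ncard_le_ncard_of_injOn Prod.fst hA ?_ hS
  rintro ⟨a, b⟩ hq ⟨a', b'⟩ hq' rfl
  rw [h a b b' hq hq']

lemma ncard_le_snd {S : Set Pt} (hS : S.Finite) (A : Set (Pt × Pt)) (hA : ∀ q ∈ A, q.2 ∈ S)
    (h : ∀ a a' b, (a, b) ∈ A → (a', b) ∈ A → a = a') : A.ncard ≤ S.ncard := by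
  refine Set.ncard_le_ncard_of_injOn Prod.snd hA ?_ hS
  rintro ⟨a, b⟩ hq ⟨a', b'⟩ hq' rfl
  rw [h a a' b hq hq']

/-- Pairs whose first point attains both maxima: the second point is its nearest neighbour. -/
lemma ncard_comparable (f₁ f₂ : Pt →ₗ[ℝ] ℝ) {S : Set Pt} (hS : S.Finite) (hdd : DistinctDists S) :
    {q : Pt × Pt | MinPair f₁ f₂ S q.1 q.2 ∧ f₁ q.2 ≤ f₁ q.1 ∧ f₂ q.2 ≤ f₂ q.1}.ncard
      ≤ S.ncard := by
  refine ncard_le_fst hS _ (fun q hq => hq.1.1.1) ?_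
  rintro a b b' ⟨⟨⟨ha, -⟩, ⟨hb, -⟩, hne, hmin⟩, h1, h2⟩ ⟨⟨-, ⟨hb', -⟩, hne', hmin'⟩, h1', h2'⟩
  dsimp only at *
  have hd : dist a b = dist a b' := by
    apply le_antisymm
    · exact hmin a ⟨ha, le_max_left _ _, le_max_left _ _⟩ b'
        ⟨hb', h1'.trans (le_max_left _ _), h2'.trans (le_max_left _ _)⟩ hne'
    · exact hmin' a ⟨ha, le_max_left _ _, le_max_left _ _⟩ b
        ⟨hb, h1.trans (le_max_left _ _), h2.trans (le_max_left _ _)⟩ hne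
  have hs := hdd a ha b hb a ha b' hb' hne hne' hd
  have : b ∈ ({a, b'} : Set Pt) := hs ▸ (by simp)
  rcases this with h | h
  · exact absurd h.symm hne
  · exact h

/-- Pairs in which each point attains exactly one of the two maxima; `t` is a `δ / 2`-net of the
unit circle, with `δ` small compared to `κ = |sin θ|`. -/
lemma ncard_incomparable {f₁ f₂ : Pt →ₗ[ℝ] ℝ} {α₁ β₁ α₂ β₂ L₁ L₂ κ δ : ℝ}
    (e₁ : ∀ w : Pt, f₁ w = α₁ * w 0 + β₁ * w 1) (e₂ : ∀ w : Pt, f₂ w = α₂ * w 0 + β₂ * w 1)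
    (hL₁ : 0 < L₁) (hL₂ : 0 < L₂)
    (h₁ : L₁ ^ 2 = α₁ ^ 2 + β₁ ^ 2) (h₂ : L₂ ^ 2 = α₂ ^ 2 + β₂ ^ 2)
    (hD : |α₁ * β₂ - α₂ * β₁| = κ * (L₁ * L₂)) (hδ0 : 0 < δ) (hδ : δ ≤ 1 / 2) (hδκ : 4 * δ < κ)
    (t : Finset Pt) (ht : Metric.sphere (0 : Pt) 1 ⊆ ⋃ x ∈ t, Metric.ball x (δ / 2))
    {S : Set Pt} (hS : S.Finite) :
    {q : Pt × Pt | MinPair f₁ f₂ S q.1 q.2 ∧ f₁ q.2 < f₁ q.1 ∧ f₂ q.1 < f₂ q.2}.ncard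
      ≤ t.card * (2 * S.ncard) := by
  set B := {q : Pt × Pt | MinPair f₁ f₂ S q.1 q.2 ∧ f₁ q.2 < f₁ q.1 ∧ f₂ q.1 < f₂ q.2} with hB
  let C : Pt → Set (Pt × Pt) := fun k => {q ∈ B | dist (dirv (q.2 - q.1)) k < δ / 2}
  -- Within a class, pairs without rival sharing the first, respectively the second, point.
  let C₁ : Pt → Set (Pt × Pt) := fun k =>
    {q ∈ C k | ∀ b, (q.1, b) ∈ C k → b ≠ q.2 → f₂ b < f₂ q.2}
  let C₂ : Pt → Set (Pt × Pt) := fun k =>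
    {q ∈ C k | ∀ a, (a, q.2) ∈ C k → a ≠ q.1 → f₁ a < f₁ q.1}
  have n₁ : ∀ k, (C₁ k).ncard ≤ S.ncard := by
    intro k
    refine ncard_le_fst hS _ (fun q hq => hq.1.1.1.1.1) ?_
    rintro a b b' ⟨h, hm⟩ ⟨h', hm'⟩
    by_contra hne
    exact lt_asymm (hm b' h' (Ne.symm hne)) (hm' b h hne)
  have n₂ : ∀ k, (C₂ k).ncard ≤ S.ncard := by
    intro k
    refine ncard_le_snd hS _ (fun q hq => hq.1.1.1.2.1.1) ?_
    rintro a a' b ⟨h, hm⟩ ⟨h', hm'⟩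
    by_contra hne
    exact lt_asymm (hm a' h' (Ne.symm hne)) (hm' a h hne)
  have close : ∀ k (X Y : Pt), dist (dirv X) k < δ / 2 → dist (dirv Y) k < δ / 2 →
      ‖dirv X - dirv Y‖ ≤ δ := by
    intro k X Y hX hY
    rw [← dist_eq_norm]
    linarith [dist_triangle_right (dirv X) (dirv Y) k]
  have split : ∀ k, C k ⊆ C₁ k ∪ C₂ k := by
    rintro k ⟨a, b⟩ hq
    by_contra hcon
    rw [Set.mem_union, not_or] at hcon
    obtain ⟨hc₁, hc₂⟩ := hcon
    have r₁ : ∃ b', (a, b') ∈ C k ∧ b' ≠ b ∧ f₂ b ≤ f₂ b' := by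
      by_contra! h
      exact hc₁ ⟨hq, h⟩
    have r₂ : ∃ a', (a', b) ∈ C k ∧ a' ≠ a ∧ f₁ a ≤ f₁ a' := by
      by_contra! h
      exact hc₂ ⟨hq, h⟩
    obtain ⟨b', ⟨⟨⟨⟨ma1, -⟩, ⟨mb1, -⟩, hne1, hmin1⟩, g11, g12⟩, hd1⟩, hbb, hf2⟩ := r₁
    obtain ⟨a', ⟨⟨⟨⟨ma2, -⟩, ⟨mb2, -⟩, hne2, hmin2⟩, g21, g22⟩, hd2⟩, haa, hf1⟩ := r₂
    obtain ⟨⟨⟨⟨ma, -⟩, ⟨mb, -⟩, hne, hmin⟩, g1, g2⟩, hd⟩ := hq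
    dsimp only at *
    rw [max_eq_left g11.le, max_eq_right g12.le] at hmin1
    rw [max_eq_left g21.le, max_eq_right g22.le] at hmin2
    have small₂ : |f₂ (b - a)| ≤ 2 * δ * L₂ * ‖b - a‖ := by
      refine small_of_rival f₂ L₂ δ (fun w => e₂ w ▸ apply_le hL₂.le h₂ w) hL₂.le hδ0.le hδ
        (b - a) (b' - a) (sub_ne_zero.2 hne.symm) (sub_ne_zero.2 hne1.symm) ?_ ?_ ?_ ?_
        (close k _ _ hd hd1)
      · rw [← dist_eq_norm', ← dist_eq_norm']
        exact hmin1 a ⟨ma, le_rfl, g12.le⟩ b ⟨mb, g1.le, hf2⟩ hne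
      · rw [sub_sub_sub_cancel_right, ← dist_eq_norm', ← dist_eq_norm]
        exact hmin1 b ⟨mb, g1.le, hf2⟩ b' ⟨mb1, g11.le, le_rfl⟩ hbb.symm
      · rw [map_sub]; linarith
      · rw [map_sub, map_sub]; linarith
    have small₁ : |f₁ (b - a)| ≤ 2 * δ * L₁ * ‖b - a‖ := by
      rw [← abs_neg, ← LinearMap.neg_apply]
      refine small_of_rival (-f₁) L₁ δ
        (fun w => by rw [LinearMap.neg_apply, abs_neg, e₁]; exact apply_le hL₁.le h₁ w)
        hL₁.le hδ0.le hδ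
        (b - a) (b - a') (sub_ne_zero.2 hne.symm) (sub_ne_zero.2 hne2.symm) ?_ ?_ ?_ ?_
        (close k _ _ hd hd2)
      · rw [← dist_eq_norm', ← dist_eq_norm']
        exact hmin2 a ⟨ma, hf1, g2.le⟩ b ⟨mb, g21.le, le_rfl⟩ hne
      · rw [sub_sub_sub_cancel_left, ← dist_eq_norm', ← dist_eq_norm]
        exact hmin2 a' ⟨ma2, le_rfl, g22.le⟩ a ⟨ma, hf1, g2.le⟩ haa
      · rw [LinearMap.neg_apply, map_sub]; linarith
      · rw [LinearMap.neg_apply, LinearMap.neg_apply, map_sub, map_sub]; linarith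
    rw [e₁] at small₁
    rw [e₂] at small₂
    have hboth := norm_le_of_both hL₁.le hL₂.le h₁ h₂ (b - a) small₁ small₂
    have hpos : 0 < ‖b - a‖ := norm_pos_iff.2 (sub_ne_zero.2 hne.symm)
    have hle := le_of_mul_le_mul_right hboth hpos
    rw [hD] at hle
    have := le_of_mul_le_mul_right hle (mul_pos hL₁ hL₂)
    linarith
  have fin : ∀ k, (C₁ k ∪ C₂ k).Finite := by
    intro k
    refine (hS.prod hS).subset ?_
    rintro q (hq | hq)
    · exact ⟨hq.1.1.1.1.1, hq.1.1.1.2.1.1⟩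
    · exact ⟨hq.1.1.1.1.1, hq.1.1.1.2.1.1⟩
  have cover : B ⊆ ⋃ k ∈ t, (C₁ k ∪ C₂ k) := by
    intro q hq
    have hX : q.2 - q.1 ≠ 0 := sub_ne_zero.2 hq.1.2.2.1.symm
    have : dirv (q.2 - q.1) ∈ Metric.sphere (0 : Pt) 1 := by
      rw [mem_sphere_zero_iff_norm, dirv, norm_smul, norm_inv, norm_norm,
        inv_mul_cancel₀ (norm_ne_zero_iff.2 hX)]
    obtain ⟨k, hk, hk'⟩ := Set.mem_iUnion₂.1 (ht this)
    exact Set.mem_iUnion₂.2 ⟨k, hk, split k ⟨hq, hk'⟩⟩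
  calc B.ncard ≤ (⋃ k ∈ t, (C₁ k ∪ C₂ k)).ncard :=
        Set.ncard_le_ncard cover (t.finite_toSet.biUnion fun k _ => fin k)
    _ ≤ ∑ k ∈ t, (C₁ k ∪ C₂ k).ncard := Finset.set_ncard_biUnion_le _ _
    _ ≤ ∑ _k ∈ t, 2 * S.ncard := by
        refine Finset.sum_le_sum fun k _ => (Set.ncard_union_le _ _).trans ?_
        linarith [n₁ k, n₂ k]
    _ = t.card * (2 * S.ncard) := by simp

/-- Coordinates for the two functionals of a wedge, with the lengths of the normal vectors. The
uniqueness of the vertex is the independence of the functionals. -/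
lemma wedge_coords {f₁ f₂ : Pt →ₗ[ℝ] ℝ} {c₁ c₂ : ℝ} {v : Pt} (hv : f₁ v = c₁ ∧ f₂ v = c₂)
    (huniq : ∀ w : Pt, f₁ w = c₁ → f₂ w = c₂ → w = v) :
    ∃ α₁ β₁ α₂ β₂ L₁ L₂ : ℝ, (∀ w : Pt, f₁ w = α₁ * w 0 + β₁ * w 1) ∧
      (∀ w : Pt, f₂ w = α₂ * w 0 + β₂ * w 1) ∧ 0 < L₁ ∧ 0 < L₂ ∧
      L₁ ^ 2 = α₁ ^ 2 + β₁ ^ 2 ∧ L₂ ^ 2 = α₂ ^ 2 + β₂ ^ 2 ∧ α₁ * β₂ - α₂ * β₁ ≠ 0 := by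
  obtain ⟨α₁, β₁, e₁⟩ := apply_eq f₁
  obtain ⟨α₂, β₂, e₂⟩ := apply_eq f₂
  have ker : ∀ p q : ℝ, α₁ * p + β₁ * q = 0 → α₂ * p + β₂ * q = 0 → p = 0 ∧ q = 0 := by
    intro p q hp hq
    have h := huniq (!₂[p, q] + v) (by rw [map_add, hv.1, e₁]; simpa using hp)
      (by rw [map_add, hv.2, e₂]; simpa using hq)
    rw [add_eq_right] at h
    exact ⟨by simpa using congrArg (fun z : Pt => z 0) h,
      by simpa using congrArg (fun z : Pt => z 1) h⟩
  have hD : α₁ * β₂ - α₂ * β₁ ≠ 0 := by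
    intro hD
    obtain ⟨rfl, h1⟩ := ker β₁ (-α₁) (by ring) (by linarith)
    obtain ⟨rfl, h2⟩ := ker β₂ (-α₂) (by linarith) (by ring)
    have h1' : α₁ = 0 := by linarith
    have h2' : α₂ = 0 := by linarith
    exact one_ne_zero (ker 1 0 (by simp [h1']) (by simp [h2'])).1
  have pos₁ : 0 < α₁ ^ 2 + β₁ ^ 2 := by
    by_contra! h
    have h3 : α₁ = 0 := by nlinarith [sq_nonneg α₁, sq_nonneg β₁]
    have h4 : β₁ = 0 := by nlinarith [sq_nonneg α₁, sq_nonneg β₁]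
    exact hD (by rw [h3, h4]; ring)
  have pos₂ : 0 < α₂ ^ 2 + β₂ ^ 2 := by
    by_contra! h
    have h3 : α₂ = 0 := by nlinarith [sq_nonneg α₂, sq_nonneg β₂]
    have h4 : β₂ = 0 := by nlinarith [sq_nonneg α₂, sq_nonneg β₂]
    exact hD (by rw [h3, h4]; ring)
  exact ⟨α₁, β₁, α₂, β₂, √(α₁ ^ 2 + β₁ ^ 2), √(α₂ ^ 2 + β₂ ^ 2), e₁, e₂, Real.sqrt_pos.2 pos₁,
    Real.sqrt_pos.2 pos₂, Real.sq_sqrt pos₁.le, Real.sq_sqrt pos₂.le, hD⟩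

/-- For every angle `θ` there is a constant `c > 0` (depending only on `θ`) such
that for every wedge `W` with angle `θ` and every finite set `S` with distinct pairwise distances
and no three points collinear, `|Φ(S, L_W)| ≤ c · |S|`. -/
theorem stmt5 (θ : ℝ) :
    ∃ c : ℝ, 0 < c ∧
      ∀ (f₁ f₂ : Pt →ₗ[ℝ] ℝ) (c₁ c₂ : ℝ) (v : Pt) (W : Set Pt),
        W = {x | f₁ x ≤ c₁} ∩ {x | f₂ x ≤ c₂} →
        (f₁ v = c₁ ∧ f₂ v = c₂) →
        (∀ w : Pt, f₁ w = c₁ → f₂ w = c₂ → w = v) →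
        (∀ x₁ ∈ {x | f₁ x = c₁} ∩ W, ∀ x₂ ∈ {x | f₂ x = c₂} ∩ W,
          x₁ ≠ v → x₂ ≠ v → ∠ x₁ v x₂ = θ) →
        ∀ S : Set Pt, S.Finite → DistinctDists S → NoThreeCollinear S →
          ((CandPairs S (Translates W)).ncard : ℝ) ≤ c * (S.ncard : ℝ) := by
  by_cases hsin : Real.sin θ = 0
  · -- No wedge has such an angle.
    refine ⟨1, one_pos, ?_⟩
    rintro f₁ f₂ c₁ c₂ v W rfl hv huniq hθ S hS hdd -
    exfalso
    obtain ⟨α₁, β₁, α₂, β₂, L₁, L₂, e₁, e₂, hL₁, hL₂, h₁, h₂, hD⟩ := wedge_coords hv huniq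
    have := det_sq e₁ e₂ hL₁.le hL₂.le h₁ h₂ hv hD hθ
    rw [hsin] at this
    exact hD (by simpa using this)
  · have hκ : 0 < |Real.sin θ| := abs_pos.2 hsin
    set δ : ℝ := |Real.sin θ| / 8 with hδ
    have hδ1 : δ ≤ 1 / 2 := by linarith [Real.abs_sin_le_one θ]
    have hδ0 : 0 < δ := by positivity
    obtain ⟨t₀, -, ht₀, hcov⟩ :=
      (isCompact_sphere (0 : Pt) 1).finite_cover_balls (half_pos hδ0)
    lift t₀ to Finset Pt using ht₀
    refine ⟨2 + 4 * t₀.card, by positivity, ?_⟩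
    rintro f₁ f₂ c₁ c₂ v W rfl hv huniq hθ S hS hdd -
    obtain ⟨α₁, β₁, α₂, β₂, L₁, L₂, e₁, e₂, hL₁, hL₂, h₁, h₂, hD⟩ := wedge_coords hv huniq
    have hdet := det_sq e₁ e₂ hL₁.le hL₂.le h₁ h₂ hv hD hθ
    have hdet' : |α₁ * β₂ - α₂ * β₁| = |Real.sin θ| * (L₁ * L₂) := by
      rw [← abs_of_pos (mul_pos hL₁ hL₂), ← abs_mul, ← sq_eq_sq_iff_abs_eq_abs, mul_pow, hdet]
    have nA := ncard_comparable f₁ f₂ hS hdd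
    have nB := ncard_incomparable e₁ e₂ hL₁ hL₂ h₁ h₂ hdet' hδ0 hδ1 (by linarith) t₀ hcov hS
    set A := {q : Pt × Pt | MinPair f₁ f₂ S q.1 q.2 ∧ f₁ q.2 ≤ f₁ q.1 ∧ f₂ q.2 ≤ f₂ q.1}
      with hA
    set B := {q : Pt × Pt | MinPair f₁ f₂ S q.1 q.2 ∧ f₁ q.2 < f₁ q.1 ∧ f₂ q.1 < f₂ q.2}
      with hB
    have fin : (A ∪ B).Finite := by
      refine (hS.prod hS).subset ?_
      rintro q (hq | hq)
      · exact ⟨hq.1.1.1, hq.1.2.1.1⟩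
      · exact ⟨hq.1.1.1, hq.1.2.1.1⟩
    have cover : CandPairs S (Translates ({x | f₁ x ≤ c₁} ∩ {x | f₂ x ≤ c₂})) ⊆
        (A ∪ B) ∪ Prod.swap '' (A ∪ B) := by
      rintro ⟨a, b⟩ hq
      have hm := minPair_of_cand hq
      dsimp only at hm
      rcases le_or_gt (f₁ b) (f₁ a) with g1 | g1 <;> rcases le_or_gt (f₂ b) (f₂ a) with g2 | g2
      · exact Or.inl (Or.inl ⟨hm, g1, g2⟩)
      · rcases g1.lt_or_eq with g1' | g1'
        · exact Or.inl (Or.inr ⟨hm, g1', g2⟩)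
        · exact Or.inr ⟨(b, a), Or.inl ⟨hm.symm, g1'.ge, g2.le⟩, rfl⟩
      · rcases g2.lt_or_eq with g2' | g2'
        · exact Or.inr ⟨(b, a), Or.inr ⟨hm.symm, g1, g2'⟩, rfl⟩
        · exact Or.inr ⟨(b, a), Or.inl ⟨hm.symm, g1.le, g2'.ge⟩, rfl⟩
      · exact Or.inr ⟨(b, a), Or.inl ⟨hm.symm, g1.le, g2.le⟩, rfl⟩
    have h3 := (Set.ncard_le_ncard cover (fin.union (fin.image _))).trans
      (Set.ncard_union_le _ _)
    rw [Set.ncard_image_of_injective _ Prod.swap_injective] at h3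
    have h4 := Set.ncard_union_le A B
    have h5 : (CandPairs S (Translates ({x | f₁ x ≤ c₁} ∩ {x | f₂ x ≤ c₂}))).ncard ≤
        (2 + 4 * t₀.card) * S.ncard := by
      calc _ ≤ 2 * (S.ncard + t₀.card * (2 * S.ncard)) := by linarith
        _ = _ := by ring
    exact_mod_cast h5
end
end

section
/- Let S ⊆ ℝ² be a finite set whose pairwise distances are all distinct. Then the number of candidate pairs of S with respect to translates of the co-wedge C that are not candidate pairs with respect to halfplanes satisfies |Φ(S, L_C) \ Φ(S, ℋ)| ≤ 8·|S|. -/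
/-!
Write `u = x - α y` and `v = y`, so that a translate of `C` is `{v ≤ s} ∪ {u ≤ t}`, a union of two
halfplanes. A candidate pair that is not a halfplane candidate has one point in each halfplane only,
so it can be oriented as `(a, b)` with `v a < v b` and `u b < u a`, and it is a closest pair of
`{v ≤ v a} ∪ {u ≤ u b}` (`edge_of_mem_phiStar`). Call such a pair an edge.

* No point is both the first point of an edge and the second point of an edge
  (`IsEdge.roles_disjoint`).
* The vector `b - a` lies in the open upper halfplane; split the latter into four sectors of angle
  `45°`. Suppose `(a, b)`, `(a, b')`, `(a', b)` are edges of the same sector with `u b' < u b` and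
  `v a' < v a`. Since `(a, b)` is at most as long as the other edges and the angle at `a` is less than
  `60°`, we get `|b b'| < |a b'|`, and symmetrically `|a a'| < |a' b|`. But `|a b'| ≤ |a a'|` and
  `|a' b| ≤ |b b'|` by the closest-pair property of `(a, b')` and `(a', b)`: a contradiction
  (`IsEdge.no_corner`).

Hence within one sector every edge has minimal `u b` among the edges at `a`, or minimal `v a`
among the edges at `b`. Charging it to `a` in the first case and to `b` otherwise is injective
(`charge_injective`), so each sector has at most `|S|` edges. Four sectors and two orientations of
each pair give `8 |S|`.
-/

open EuclideanGeometry

noncomputable section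

/-- A closed halfplane in `ℝ²`. -/
def IsClosedHalfplane (H : Set Pt) : Prop :=
  ∃ (f : Pt →ₗ[ℝ] ℝ) (c : ℝ), f ≠ 0 ∧ H = {x | f x ≤ c}
/-- The point `(x, y) ∈ ℝ²`. -/
def pt2 (x y : ℝ) : Pt := (EuclideanSpace.equiv (Fin 2) ℝ).symm ![x, y]

/-- The co-wedge `C = {(x,y) : y ≤ 0} ∪ {(x,y) : x ≤ αy}`, with vertex at the origin. -/
def coWedge (α : ℝ) : Set Pt := {z | z 1 ≤ 0 ∨ z 0 ≤ α * z 1}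

/-- The complementary wedge `W = {(x,y) : y ≥ 0} ∩ {(x,y) : x ≥ αy}`. -/
def compWedge (α : ℝ) : Set Pt := {z | 0 ≤ z 1 ∧ α * z 1 ≤ z 0}

/-- The branch `r = {(t, 0) : t ≥ 0}`. -/
def rBr : Set Pt := {z | ∃ t : ℝ, 0 ≤ t ∧ z = pt2 t 0}

/-- The branch `r' = {(αt, t) : t ≥ 0}`. -/
def r'Br (α : ℝ) : Set Pt := {z | ∃ t : ℝ, 0 ≤ t ∧ z = pt2 (α * t) t}

/-- `ℋ`: the family of all closed halfplanes in `ℝ²`. -/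
def Halfplanes : Set (Set Pt) := {H | IsClosedHalfplane H}

/-- `Φ* = Φ(S, L_C) \ Φ(S, ℋ)`. -/
def PhiStar (α : ℝ) (S : Set Pt) : Set (Pt × Pt) :=
  CandPairs S (Translates (coWedge α)) \ CandPairs S Halfplanes

/-- `x` is the `r`-point of the pair `φ`: `x` is one of the two points of `φ` and lies on the
branch `p + r` of the smallest `W`-translate containing the two points of `φ`. -/
def IsRPoint (α : ℝ) (φ : Pt × Pt) (x : Pt) : Prop :=
  x ∈ ({φ.1, φ.2} : Set Pt) ∧
    ∃ p : Pt, IsSmallestTrans (compWedge α) {φ.1, φ.2} p ∧ x ∈ tr p rBr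

/-- `x` is the `r'`-point of the pair `φ`: `x` is one of the two points of `φ` and lies on the
branch `p + r'` of the smallest `W`-translate containing the two points of `φ`. -/
def IsR'Point (α : ℝ) (φ : Pt × Pt) (x : Pt) : Prop :=
  x ∈ ({φ.1, φ.2} : Set Pt) ∧
    ∃ p : Pt, IsSmallestTrans (compWedge α) {φ.1, φ.2} p ∧ x ∈ tr p (r'Br α)

/-- The linear functional `u = x - α y`; the second halfplane of the co-wedge is `{u ≤ 0}`. -/
def skew (α : ℝ) (z : Pt) : ℝ := z 0 - α * z 1

/-- `(a, b)` is an edge of `S`: `a` is strictly below `b` in the coordinate `v = y`, strictly beyond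
`b` in the coordinate `u = x - α y`, and `(a, b)` is a closest pair of `S` within
`{v ≤ v a} ∪ {u ≤ u b}`, the smallest translate of the co-wedge containing both. -/
structure IsEdge (α : ℝ) (S : Set Pt) (a b : Pt) : Prop where
  left_mem : a ∈ S
  right_mem : b ∈ S
  lt_v : a 1 < b 1
  lt_u : skew α b < skew α a
  dist_le : ∀ x ∈ S, ∀ y ∈ S, (x 1 ≤ a 1 ∨ skew α x ≤ skew α b) →
    (y 1 ≤ a 1 ∨ skew α y ≤ skew α b) → x ≠ y → dist a b ≤ dist x y

open Classical in
/-- The `45°` sector of the upper halfplane that contains the vector `b - a`, encoded by the sign of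
its abscissa and by whether it is at most `45°` away from the vertical. -/
def sector (a b : Pt) : Bool × Bool :=
  (decide (0 ≤ b 0 - a 0), decide (|b 0 - a 0| ≤ b 1 - a 1))

open Classical in
/-- The point to which the edge `(a, b)` is charged: `a` if `u b` is minimal among the edges
`(a, b')` of the same sector, and `b` otherwise. -/
def charge (α : ℝ) (S : Set Pt) (a b : Pt) : Pt :=
  if ∃ b', IsEdge α S a b' ∧ sector a b' = sector a b ∧ skew α b' < skew α b then b else a

/-! ### Edges from candidate pairs -/

lemma mem_tr_coWedge (α : ℝ) (p z : Pt) :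
    z ∈ tr p (coWedge α) ↔ z 1 ≤ p 1 ∨ skew α z ≤ skew α p := by
  constructor
  · rintro ⟨w, hw, rfl⟩
    rcases hw with h | h
    · left; simp; linarith
    · right; simp [skew]; linarith
  · intro h
    refine ⟨z - p, ?_, by simp⟩
    rcases h with h | h
    · left; simp; linarith
    · right; simp [skew] at h ⊢; linarith

lemma halfplane_v_mem (c : ℝ) : {z : Pt | z 1 ≤ c} ∈ Halfplanes := by
  refine ⟨(EuclideanSpace.proj (𝕜 := ℝ) (1 : Fin 2)).toLinearMap, c, ?_, ?_⟩
  · intro h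
    have := congrArg (fun f => f (pt2 0 1)) h
    simp [pt2] at this
  · ext z; simp

lemma halfplane_u_mem (α c : ℝ) : {z : Pt | skew α z ≤ c} ∈ Halfplanes := by
  refine ⟨(EuclideanSpace.proj (𝕜 := ℝ) (0 : Fin 2)).toLinearMap
    - α • (EuclideanSpace.proj (𝕜 := ℝ) (1 : Fin 2)).toLinearMap, c, ?_, ?_⟩
  · intro h
    have := congrArg (fun f => f (pt2 1 0)) h
    simp [pt2] at this
  · ext z; simp [skew]

/-- A closest pair stays a candidate for every range of the family that contains it and is
contained in the original range. -/
lemma candPair_of_subset {S X Y : Set Pt} {𝒳 : Set (Set Pt)} {φ : Pt × Pt}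
    (h : IsClosestPair (S ∩ X) φ.1 φ.2) (hY : Y ∈ 𝒳) (hYX : Y ⊆ X) (h1 : φ.1 ∈ Y) (h2 : φ.2 ∈ Y) :
    φ ∈ CandPairs S 𝒳 :=
  ⟨Y, hY, ⟨h.1.1, h1⟩, ⟨h.2.1.1, h2⟩, h.2.2.1, fun x hx y hy hxy =>
    h.2.2.2 x ⟨hx.1, hYX hx.2⟩ y ⟨hy.1, hYX hy.2⟩ hxy⟩

lemma edge_of_mem_phiStar {α : ℝ} {S : Set Pt} {φ : Pt × Pt} (h : φ ∈ PhiStar α S) :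
    IsEdge α S φ.1 φ.2 ∨ IsEdge α S φ.2 φ.1 := by
  obtain ⟨⟨X, ⟨p, rfl⟩, hcp⟩, hH⟩ := h
  have hv : ¬ (φ.1 1 ≤ p 1 ∧ φ.2 1 ≤ p 1) := fun hc => hH <|
    candPair_of_subset hcp (halfplane_v_mem (p 1))
      (fun z hz => (mem_tr_coWedge α p z).2 (Or.inl hz)) hc.1 hc.2
  have hu : ¬ (skew α φ.1 ≤ skew α p ∧ skew α φ.2 ≤ skew α p) := fun hc => hH <|
    candPair_of_subset hcp (halfplane_u_mem α (skew α p))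
      (fun z hz => (mem_tr_coWedge α p z).2 (Or.inr hz)) hc.1 hc.2
  obtain ⟨⟨h1, h1'⟩, ⟨h2, h2'⟩, -, hmin⟩ := hcp
  rw [mem_tr_coWedge] at h1' h2'
  by_cases hc : φ.1 1 ≤ p 1
  · have hc2 : p 1 < φ.2 1 := by by_contra! hcon; exact hv ⟨hc, hcon⟩
    have hc3 : skew α φ.2 ≤ skew α p := h2'.resolve_left (not_le.2 hc2)
    have hc4 : skew α p < skew α φ.1 := by by_contra! hcon; exact hu ⟨hcon, hc3⟩
    refine Or.inl ⟨h1, h2, by linarith, by linarith, fun x hx y hy hx' hy' hxy => ?_⟩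
    exact hmin x ⟨hx, (mem_tr_coWedge α p x).2 (hx'.imp (·.trans hc) (·.trans hc3))⟩
      y ⟨hy, (mem_tr_coWedge α p y).2 (hy'.imp (·.trans hc) (·.trans hc3))⟩ hxy
  · have hc3 : skew α φ.1 ≤ skew α p := h1'.resolve_left hc
    have hc4 : skew α p < skew α φ.2 := by by_contra! hcon; exact hu ⟨hc3, hcon⟩
    have hc2 : φ.2 1 ≤ p 1 := h2'.resolve_right (not_le.2 hc4)
    refine Or.inr ⟨h2, h1, by linarith, by linarith, fun x hx y hy hx' hy' hxy => ?_⟩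
    rw [dist_comm]
    exact hmin x ⟨hx, (mem_tr_coWedge α p x).2 (hx'.imp (·.trans hc2) (·.trans hc3))⟩
      y ⟨hy, (mem_tr_coWedge α p y).2 (hy'.imp (·.trans hc2) (·.trans hc3))⟩ hxy

/-! ### Edges sharing a point -/

section
variable {α : ℝ} {S : Set Pt} {a b a' b' : Pt}

lemma IsEdge.ne (h : IsEdge α S a b) : a ≠ b := by
  rintro rfl
  exact lt_irrefl _ h.lt_v

lemma DistinctDists.dist_ne_left (hdd : DistinctDists S) (h : IsEdge α S a b)
    (h' : IsEdge α S a b') (hb : b ≠ b') : dist a b ≠ dist a b' := fun he => by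
  have hs := hdd a h.left_mem b h.right_mem a h'.left_mem b' h'.right_mem h.ne h'.ne he
  have hm : b ∈ ({a, b'} : Set Pt) := hs ▸ (by simp)
  rcases hm with hm | hm
  · exact h.ne hm.symm
  · exact hb hm

lemma DistinctDists.dist_ne_right (hdd : DistinctDists S) (h : IsEdge α S a b)
    (h' : IsEdge α S a' b) (ha : a ≠ a') : dist a b ≠ dist a' b := fun he => by
  have hs := hdd a h.left_mem b h.right_mem a' h'.left_mem b h'.right_mem h.ne h'.ne he
  have hm : a ∈ ({a', b} : Set Pt) := hs ▸ (by simp)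
  rcases hm with hm | hm
  · exact ha hm
  · exact h.ne hm

/-- If `b'` precedes `b`, then the region of `(a, b)` contains `b'`, so `(a, b)` is shorter. -/
lemma IsEdge.dist_le_left (h : IsEdge α S a b) (h' : IsEdge α S a b')
    (hu : skew α b' ≤ skew α b) : dist a b ≤ dist a b' :=
  h.dist_le a h'.left_mem b' h'.right_mem (Or.inl le_rfl) (Or.inr hu) h'.ne

lemma IsEdge.dist_le_right (h : IsEdge α S a b) (h' : IsEdge α S a' b)
    (hv : a' 1 ≤ a 1) : dist a b ≤ dist a' b := by
  have hn := h'.ne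
  exact h.dist_le a' h'.left_mem b h'.right_mem (Or.inl hv) (Or.inr le_rfl) hn

/-- For edges `(a, x)` and `(x, b)`, the region of each contains the other, so they would have
equal lengths. -/
lemma IsEdge.roles_disjoint (hdd : DistinctDists S) {x : Pt} (h : IsEdge α S a x)
    (h' : IsEdge α S x b) : False := by
  have h1 : dist a x ≤ dist x b := h.dist_le x h'.left_mem b h'.right_mem
    (Or.inr le_rfl) (Or.inr h'.lt_u.le) h'.ne
  have h2 : dist x b ≤ dist a x := h'.dist_le a h.left_mem x h.right_mem
    (Or.inl h.lt_v.le) (Or.inl le_rfl) h.ne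
  have hs := hdd a h.left_mem x h.right_mem x h'.left_mem b h'.right_mem h.ne h'.ne
    (le_antisymm h1 h2)
  have hm : a ∈ ({x, b} : Set Pt) := hs ▸ (by simp)
  rcases hm with hm | hm
  · exact h.ne hm
  · have hm : a = b := hm
    subst hm
    exact lt_asymm h'.lt_v h.lt_v

/-! ### The sector argument -/

lemma dist_sq_coord (x y : Pt) : dist x y ^ 2 = (y 0 - x 0) ^ 2 + (y 1 - x 1) ^ 2 := by
  rw [EuclideanSpace.dist_eq, Real.sq_sqrt (by positivity)]
  simp [Fin.sum_univ_two, Real.dist_eq, sq_abs]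
  ring

/-- Two nonzero vectors `p`, `q` of one sector satisfy `⟪p, q⟫ ≥ |p| |q| / 2`; thus `|p| < |q|` gives
`|p|² < 2 ⟪p, q⟫`, that is, `|q - p| < |q|`. -/
lemma sector_ineq {x y x' y' : ℝ} (hy : 0 < y) (hy' : 0 < y') (hs : 0 ≤ x ↔ 0 ≤ x')
    (hd : |x| ≤ y ↔ |x'| ≤ y') (hlt : x ^ 2 + y ^ 2 < x' ^ 2 + y' ^ 2) :
    (x' - x) ^ 2 + (y' - y) ^ 2 < x' ^ 2 + y' ^ 2 := by
  have hxx : 0 ≤ x * x' := by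
    by_cases h : 0 ≤ x
    · exact mul_nonneg h (hs.1 h)
    · have h2 : ¬ 0 ≤ x' := fun hc => h (hs.2 hc)
      push Not at h h2
      exact (mul_pos_of_neg_of_neg h h2).le
  have hyy : 0 < y * y' := by positivity
  -- It suffices to bound the inner product from below by half the product of the lengths.
  suffices hkey : (x ^ 2 + y ^ 2) * (x' ^ 2 + y' ^ 2) ≤ (2 * (x * x' + y * y')) ^ 2 by
    have hp : 0 < x ^ 2 + y ^ 2 := by positivity
    have : (x ^ 2 + y ^ 2) ^ 2 < (2 * (x * x' + y * y')) ^ 2 :=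
      lt_of_lt_of_le (by nlinarith) hkey
    have := lt_of_pow_lt_pow_left₀ 2 (by positivity) this
    nlinarith
  by_cases h : |x| ≤ y
  · have h2 := hd.1 h
    have e1 : x ^ 2 ≤ y ^ 2 := sq_le_sq.2 (by rwa [abs_of_pos hy])
    have e2 : x' ^ 2 ≤ y' ^ 2 := sq_le_sq.2 (by rwa [abs_of_pos hy'])
    calc (x ^ 2 + y ^ 2) * (x' ^ 2 + y' ^ 2) ≤ (2 * y ^ 2) * (2 * y' ^ 2) := by
          gcongr <;> linarith
      _ = (2 * (y * y')) ^ 2 := by ring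
      _ ≤ _ := by gcongr; linarith
  · have h2 : ¬ |x'| ≤ y' := fun hc => h (hd.2 hc)
    push Not at h h2
    have e1 : y ^ 2 ≤ x ^ 2 := sq_le_sq.2 (by rw [abs_of_pos hy]; exact h.le)
    have e2 : y' ^ 2 ≤ x' ^ 2 := sq_le_sq.2 (by rw [abs_of_pos hy']; exact h2.le)
    calc (x ^ 2 + y ^ 2) * (x' ^ 2 + y' ^ 2) ≤ (2 * x ^ 2) * (2 * x' ^ 2) := by
          gcongr <;> linarith
      _ = (2 * (x * x')) ^ 2 := by ring
      _ ≤ _ := by gcongr; linarith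

lemma sector_eq_iff : sector a b = sector a' b' ↔
    (0 ≤ b 0 - a 0 ↔ 0 ≤ b' 0 - a' 0) ∧
      (|b 0 - a 0| ≤ b 1 - a 1 ↔ |b' 0 - a' 0| ≤ b' 1 - a' 1) := by
  simp [sector]

/-- In one sector, `(a, b)` cannot be preceded both by an edge at `a` and by an edge at `b`. -/
lemma IsEdge.no_corner (hdd : DistinctDists S) (h : IsEdge α S a b)
    (hb : IsEdge α S a b') (ha : IsEdge α S a' b)
    (hsb : sector a b' = sector a b) (hsa : sector a' b = sector a b)
    (hu : skew α b' < skew α b) (hv : a' 1 < a 1) : False := by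
  have hbb : b ≠ b' := by rintro rfl; exact lt_irrefl _ hu
  have haa : a ≠ a' := by rintro rfl; exact lt_irrefl _ hv
  have h1 : dist a b < dist a b' :=
    lt_of_le_of_ne (h.dist_le_left hb hu.le) (hdd.dist_ne_left h hb hbb)
  have h2 : dist a b < dist a' b :=
    lt_of_le_of_ne (h.dist_le_right ha hv.le) (hdd.dist_ne_right h ha haa)
  have h3 : dist a b' ≤ dist a a' := hb.dist_le a h.left_mem a' ha.left_mem
    (Or.inl le_rfl) (Or.inl hv.le) haa
  have h4 : dist a' b ≤ dist b b' := ha.dist_le b h.right_mem b' hb.right_mem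
    (Or.inr le_rfl) (Or.inr hu.le) hbb
  rw [sector_eq_iff] at hsb hsa
  have h5 : dist b b' < dist a b' := by
    refine lt_of_pow_lt_pow_left₀ 2 dist_nonneg ?_
    have := pow_lt_pow_left₀ h1 dist_nonneg two_ne_zero
    rw [dist_sq_coord, dist_sq_coord] at this ⊢
    have := sector_ineq (sub_pos.2 h.lt_v) (sub_pos.2 hb.lt_v) hsb.1.symm hsb.2.symm this
    linarith
  have h6 : dist a a' < dist a' b := by
    refine lt_of_pow_lt_pow_left₀ 2 dist_nonneg ?_
    have := pow_lt_pow_left₀ h2 dist_nonneg two_ne_zero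
    rw [dist_sq_coord, dist_sq_coord] at this ⊢
    have := sector_ineq (sub_pos.2 h.lt_v) (sub_pos.2 ha.lt_v) hsa.1.symm hsa.2.symm this
    linarith
  linarith

/-! ### Counting -/

lemma IsEdge.charge_mem (h : IsEdge α S a b) : charge α S a b ∈ S := by
  unfold charge
  split_ifs
  exacts [h.right_mem, h.left_mem]

lemma charge_injective (hdd : DistinctDists S) (h : IsEdge α S a b) (h' : IsEdge α S a' b')
    (hs : sector a b = sector a' b') (hc : charge α S a b = charge α S a' b') :
    a = a' ∧ b = b' := by
  unfold charge at hc
  split_ifs at hc with c1 c2 c2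
  · subst hc
    refine ⟨?_, rfl⟩
    by_contra hne
    obtain ⟨d, hd, hds, hdu⟩ := c1
    obtain ⟨d', hd', hds', hdu'⟩ := c2
    rcases lt_trichotomy (a 1) (a' 1) with hv | hv | hv
    · exact h'.no_corner hdd hd' h hds' hs hdu' hv
    · exact hdd.dist_ne_right h h' hne
        (le_antisymm (h.dist_le_right h' hv.ge) (h'.dist_le_right h hv.le))
    · exact h.no_corner hdd hd h' hds hs.symm hdu hv
  · subst hc
    exact (h.roles_disjoint hdd h').elim
  · subst hc
    exact (h'.roles_disjoint hdd h).elim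
  · subst hc
    refine ⟨rfl, ?_⟩
    by_contra hne
    push Not at c1 c2
    have e1 := c1 b' h' hs.symm
    have e2 := c2 b h hs
    exact hdd.dist_ne_left h h' hne (le_antisymm (h.dist_le_left h' e2) (h'.dist_le_left h e1))

end

open Classical in
/-- The charged point of a pair, its sector and its orientation. -/
def code (α : ℝ) (S : Set Pt) (φ : Pt × Pt) : Pt × (Bool × Bool) × Bool :=
  if IsEdge α S φ.1 φ.2 then (charge α S φ.1 φ.2, sector φ.1 φ.2, true)
  else (charge α S φ.2 φ.1, sector φ.2 φ.1, false)

/-- For every finite set `S` with distinct pairwise distances,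
`|Φ(S, L_C) \ Φ(S, ℋ)| ≤ 8·|S|`. -/
theorem stmt9 (α : ℝ) (S : Set Pt) (hS : S.Finite) (hdd : DistinctDists S) :
    (PhiStar α S).ncard ≤ 8 * S.ncard := by
  classical
  have hmaps : ∀ φ ∈ PhiStar α S, code α S φ ∈ S ×ˢ (Set.univ : Set ((Bool × Bool) × Bool)) := by
    intro φ hφ
    refine ⟨?_, trivial⟩
    unfold code
    split_ifs with h
    · exact h.charge_mem
    · exact ((edge_of_mem_phiStar hφ).resolve_left h).charge_mem
  have hinj : Set.InjOn (code α S) (PhiStar α S) := by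
    intro φ hφ ψ hψ he
    unfold code at he
    split_ifs at he with h1 h2 h2 <;> simp only [Prod.mk.injEq, reduceCtorEq, and_false] at he
    · obtain ⟨e1, e2⟩ := charge_injective hdd h1 h2 he.2.1 he.1
      exact Prod.ext e1 e2
    · obtain ⟨e1, e2⟩ := charge_injective hdd ((edge_of_mem_phiStar hφ).resolve_left h1)
        ((edge_of_mem_phiStar hψ).resolve_left h2) he.2.1 he.1
      exact Prod.ext e2 e1
  calc (PhiStar α S).ncard ≤ (S ×ˢ (Set.univ : Set ((Bool × Bool) × Bool))).ncard :=
        Set.ncard_le_ncard_of_injOn _ hmaps hinj (hS.prod Set.finite_univ)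
    _ = 8 * S.ncard := by
        rw [Set.ncard_prod, Set.ncard_univ]
        simp [Nat.card_eq_fintype_card, mul_comm]
end
end

section
/- Let C be a convex body in ℝ² and let p₁, p₂, p₁', p₂' ∈ ℝ² be four points (not necessarily distinct) such that the interiors of I = C_{p₁} ∩ C_{p₂} and I' = C_{p₁'} ∩ C_{p₂'} are both nonempty. Suppose that any three pairwise-distinct points among p₁, p₂, p₁', p₂' are not collinear. If the segments [p₁,p₂] and [p₁',p₂'] do not cross and I ∩ I' ≠ ∅, then I and I' intersect plainly. -/
/-!
Write `A = C_{p₁} ∩ C_{p₂}` and `B = C_{q₁} ∩ C_{q₂}`; by symmetry it is enough to show that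
`∂A ∩ B` is connected.

If it is not, there are points `x, y ∈ ∂A ∩ B` and points `u, w ∈ A \ B` strictly on opposite sides
of the line `xy` (`quad`). Indeed, if `[x, y] ⊆ ∂A` then `[x, y]` joins `x` and `y` inside `∂A ∩ B`;
otherwise the line `xy` meets the interior of `A` and cuts `∂A` into two arcs, which are connected
because each is the radial image of a half-plane (`arc`), and neither of them lies in `B`.

Choose `a, b ∈ {p₁, p₂}` with `x ∈ ∂C_a`, `y ∈ ∂C_b`, and `c, d ∈ {q₁, q₂}` with `u ∉ C_c`,
`w ∉ C_d`. The Hahn-Banach theorem turns these four facts into linear functionals: `ga` and `gb`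
support `C_a` at `x` and `C_b` at `y`, and `m` and `n` separate `u` from `C_c` and `w` from `C_d`.
Since all these bodies are translates of each other, every known membership, such as `x ∈ C_c`, also
provides a point of `C_a`, here `x + (a - c)`. Hence everything becomes a linear inequality in
`a, b, c, d`. With `e = y - x`, and `f` the functional vanishing on `e` and positive on the side of
`u`, the inequalities place `c` and `d` weakly on opposite sides of the line `ab` (`half`, applied
once as it stands and once after a half-turn of the picture). As no three distinct centres are
collinear, the sides are strict, and `ga`, `gb` force the point where the line `ab` meets `[c, d]`
to lie strictly between `a` and `b` (`core_lt`, `core`). In particular `a ≠ b` and `c ≠ d`, so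
`[p₁, p₂]` and `[q₁, q₂]` cross, against the hypothesis.
-/

open EuclideanGeometry

noncomputable section

/-- A convex body in `ℝ²`: a compact convex set with nonempty interior. -/
def IsConvexBody (C : Set Pt) : Prop :=
  IsCompact C ∧ Convex ℝ C ∧ (interior C).Nonempty

/-- Two sets intersect plainly: `∂C ∩ D` and `∂D ∩ C` are both connected. -/
def PlainlyIntersect (C D : Set Pt) : Prop :=
  IsPreconnected (frontier C ∩ D) ∧ IsPreconnected (frontier D ∩ C)

/-- A line in `ℝ²`. -/
def IsLine (l : Set Pt) : Prop :=
  ∃ a d : Pt, d ≠ 0 ∧ l = {x | ∃ t : ℝ, x = a + t • d}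

/-- `H` is a closed side of the line `l`. -/
def IsSideOf (l H : Set Pt) : Prop :=
  ∃ (f : Pt →ₗ[ℝ] ℝ) (c : ℝ), f ≠ 0 ∧ l = {x | f x = c} ∧ H = {x | f x ≤ c}

/-- `H` is a `C`-vanishing side of the line `l`: the length `len_C` of the sections of `C` by the
lines parallel to `l` within `H` is non-increasing (as a function of the distance from `l`) on the
set of lines meeting `C`.  Here `len_C` of a line is the diameter of the corresponding section. -/
def VanishingSide (C l H : Set Pt) : Prop :=
  ∃ (f : Pt →ₗ[ℝ] ℝ) (c : ℝ), f ≠ 0 ∧ l = {x | f x = c} ∧ H = {x | f x ≤ c} ∧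
    ∀ s t : ℝ, 0 ≤ s → s ≤ t →
      (C ∩ {x | f x = c - s}).Nonempty → (C ∩ {x | f x = c - t}).Nonempty →
      Metric.diam (C ∩ {x | f x = c - t}) ≤ Metric.diam (C ∩ {x | f x = c - s})

/-- A splitting configuration `(u, v, l, σ₁, σ₂)` for `(C, p₁, p₂)`, where
`I = C_{p₁} ∩ C_{p₂}`:  `u ≠ v` are points of `∂I`, `l` is the line through `u` and `v`, both
closed sides of `l` are `I`-vanishing, `l` is not parallel to the line through `p₁, p₂`,
`I ∩ l = [u, v]`, and `∂I` is the union of two connected arcs `σ₁ ⊆ ∂C_{p₁}`, `σ₂ ⊆ ∂C_{p₂}`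
meeting exactly in `{u, v}`. -/
def SplittingConfig (C : Set Pt) (p₁ p₂ u v : Pt) (l σ₁ σ₂ : Set Pt) : Prop :=
  u ≠ v ∧
  u ∈ frontier (tr p₁ C ∩ tr p₂ C) ∧ v ∈ frontier (tr p₁ C ∩ tr p₂ C) ∧
  l = {x | ∃ t : ℝ, x = u + t • (v - u)} ∧
  (∀ H : Set Pt, IsSideOf l H → VanishingSide (tr p₁ C ∩ tr p₂ C) l H) ∧
  (¬ ∃ t : ℝ, p₂ - p₁ = t • (v - u)) ∧
  (tr p₁ C ∩ tr p₂ C) ∩ l = segment ℝ u v ∧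
  IsConnected σ₁ ∧ IsConnected σ₂ ∧
  frontier (tr p₁ C ∩ tr p₂ C) = σ₁ ∪ σ₂ ∧ σ₁ ∩ σ₂ = {u, v} ∧
  σ₁ ⊆ frontier (tr p₁ C) ∧ σ₂ ⊆ frontier (tr p₂ C)

/-! ### Arcs of the boundary of a convex body -/

/-- The part of the boundary of a bounded convex neighbourhood `S` of `0` in a closed half-plane
through `0` is connected: it is the image of the half-plane minus `0`, which is connected as it lies
between the open half-plane and its closure, under `z ↦ z / gauge S z`. The vector `v` witnesses
that `f` is not zero. -/
theorem arc0 (S : Set Pt) (hS : Convex ℝ S) (h0 : S ∈ nhds (0 : Pt)) (hb : Bornology.IsBounded S)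
    (f : Pt →ₗ[ℝ] ℝ) (v : Pt) (hv : 0 < f v) :
    IsPreconnected (frontier S ∩ {z | 0 ≤ f z}) := by
  have hfc : Continuous f := f.continuous_of_finiteDimensional
  have hpos : ∀ z : Pt, z ≠ 0 → 0 < gauge S z := fun z hz =>
    (gauge_pos (absorbent_nhds_zero h0) ((NormedSpace.isVonNBounded_iff ℝ).2 hb)).2 hz
  have hK : IsPreconnected {z : Pt | 0 ≤ f z ∧ z ≠ 0} := by
    refine IsPreconnected.subset_closure (s := {z : Pt | 0 < f z})
      (convex_halfSpace_gt f.isLinear 0).isPreconnected ?_ ?_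
    · intro z hz
      refine ⟨le_of_lt hz, ?_⟩
      rintro rfl
      simp at hz
    · rintro z ⟨hz, -⟩
      have ht : Filter.Tendsto (fun t : ℝ => z + t • v) (nhdsWithin 0 (Set.Ioi 0)) (nhds z) := by
        have : Continuous (fun t : ℝ => z + t • v) := by fun_prop
        have h := this.tendsto 0
        simp only [zero_smul, add_zero] at h
        exact h.mono_left nhdsWithin_le_nhds
      refine mem_closure_of_tendsto ht ?_
      filter_upwards [self_mem_nhdsWithin] with t ht
      have : 0 < t * f v := mul_pos ht hv
      simp only [map_add, map_smul, smul_eq_mul]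
      linarith
  have himg : frontier S ∩ {z | 0 ≤ f z} =
      (fun z => (gauge S z)⁻¹ • z) '' {z : Pt | 0 ≤ f z ∧ z ≠ 0} := by
    ext z
    constructor
    · rintro ⟨hz, hfz⟩
      have h1 := (gauge_eq_one_iff_mem_frontier hS h0).2 hz
      refine ⟨z, ⟨hfz, ?_⟩, by simp [h1]⟩
      rintro rfl
      simp at h1
    · rintro ⟨y, ⟨hy, hy0⟩, rfl⟩
      have h1 := hpos y hy0
      refine ⟨(gauge_eq_one_iff_mem_frontier hS h0).1 ?_, ?_⟩
      · rw [gauge_smul_of_nonneg (inv_nonneg.2 h1.le), smul_eq_mul, inv_mul_cancel₀ h1.ne']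
      · simp only [Set.mem_ofPred_eq, map_smul, smul_eq_mul]
        positivity
  rw [himg]
  refine hK.image _ ?_
  refine ContinuousOn.smul (ContinuousOn.inv₀ (continuous_gauge hS h0).continuousOn ?_)
    continuousOn_id
  rintro z ⟨-, hz⟩
  exact ne_of_gt (hpos z hz)

/-- The version of `arc0` for a half-plane whose boundary line passes through an interior point `o`.
-/
theorem arc (A : Set Pt) (hA : Convex ℝ A) (hb : Bornology.IsBounded A) (o : Pt)
    (ho : o ∈ interior A) (f : Pt →ₗ[ℝ] ℝ) (v : Pt) (hv : 0 < f v) :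
    IsPreconnected (frontier A ∩ {z | f o ≤ f z}) := by
  let φ : Pt ≃ₜ Pt := Homeomorph.addLeft o
  have hS : Convex ℝ (φ ⁻¹' A) := hA.translate_preimage_right o
  have h0 : φ ⁻¹' A ∈ nhds (0 : Pt) := by
    refine φ.continuous.continuousAt.preimage_mem_nhds ?_
    simpa [φ] using mem_interior_iff_mem_nhds.1 ho
  have hb' : Bornology.IsBounded (φ ⁻¹' A) := by
    obtain ⟨R, hR⟩ := hb.exists_norm_le
    refine isBounded_iff_forall_norm_le.2 ⟨R + ‖o‖, fun z hz => ?_⟩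
    have h1 := hR (o + z) hz
    calc ‖z‖ = ‖(o + z) - o‖ := by simp
      _ ≤ ‖o + z‖ + ‖o‖ := norm_sub_le _ _
      _ ≤ _ := by linarith
  have h := (arc0 _ hS h0 hb' f v hv).image φ φ.continuous.continuousOn
  convert h using 1
  rw [← φ.preimage_frontier]
  ext z
  constructor
  · rintro ⟨hz, hfz⟩
    refine ⟨z - o, ⟨?_, ?_⟩, ?_⟩
    · simpa [φ] using hz
    · simpa using hfz
    · simp [φ]
  · rintro ⟨y, ⟨hy, hfy⟩, rfl⟩
    refine ⟨hy, ?_⟩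
    simpa [φ] using hfy

/-- In the plane there is a nonzero linear functional whose kernel is spanned by `e ≠ 0`. -/
theorem exists_det (e : Pt) (he : e ≠ 0) : ∃ f : Pt →ₗ[ℝ] ℝ, f e = 0 ∧
    (∀ z, f z = 0 → ∃ t : ℝ, z = t • e) ∧ ∃ v, 0 < f v := by
  have hpos : 0 < e 0 * e 0 + e 1 * e 1 := by
    by_contra h
    have h0 : e 0 = 0 := by nlinarith [mul_self_nonneg (e 0), mul_self_nonneg (e 1)]
    have h1 : e 1 = 0 := by nlinarith [mul_self_nonneg (e 0), mul_self_nonneg (e 1)]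
    apply he
    ext i
    fin_cases i <;> simp [h0, h1]
  refine ⟨{ toFun := fun z => e 0 * z 1 - e 1 * z 0
            map_add' := fun x y => by simp only [PiLp.add_apply]; ring
            map_smul' := fun t x => by
              simp only [PiLp.smul_apply, smul_eq_mul, RingHom.id_apply]; ring }, ?_, ?_, ?_⟩
  · simp only [LinearMap.coe_mk, AddHom.coe_mk]; ring
  · intro z hz
    simp only [LinearMap.coe_mk, AddHom.coe_mk] at hz
    refine ⟨(z 0 * e 0 + z 1 * e 1) / (e 0 * e 0 + e 1 * e 1), ?_⟩
    ext i
    fin_cases i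
    · simp only [Fin.zero_eta, PiLp.smul_apply, smul_eq_mul]
      rw [div_mul_eq_mul_div, eq_div_iff hpos.ne']
      linear_combination (-e 1) * hz
    · simp only [Fin.mk_one, PiLp.smul_apply, smul_eq_mul]
      rw [div_mul_eq_mul_div, eq_div_iff hpos.ne']
      linear_combination (e 0) * hz
  · refine ⟨!₂[-e 1, e 0], ?_⟩
    simp
    linarith

/-- A point of a convex set lying between a point of the set and an interior point is interior. -/
theorem beyond (A : Set Pt) (hA : Convex ℝ A) (x e : Pt) (s t : ℝ) (hs : 0 < s) (ht : t < 0)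
    (ho : x + s • e ∈ interior A) (hu : x + t • e ∈ A) : x ∈ interior A := by
  refine hA.openSegment_interior_self_subset_interior ho hu
    ⟨-t / (s - t), s / (s - t), by apply div_pos <;> linarith, by apply div_pos <;> linarith, ?_, ?_⟩
  · rw [← add_div]; exact (div_eq_one_iff_eq (by linarith)).2 (by ring)
  · have h : s - t ≠ 0 := by linarith
    match_scalars <;> field_simp <;> ring

/-- If the chord from `x` to `y` of `A` passes through the interior of `A`, the line `xy` meets `A`
only in `[x, y]`, which is contained in `B`; so a point of `A \ B` is off this line. -/
theorem strict_side (A B : Set Pt) (hA : Convex ℝ A) (hAc : IsClosed A) (hB : Convex ℝ B)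
    (x y o u : Pt) (hx : x ∈ frontier A ∩ B) (hy : y ∈ frontier A ∩ B)
    (ho : o ∈ openSegment ℝ x y) (hoA : o ∈ interior A) (huA : u ∈ A) (huB : u ∉ B) :
    ¬ ∃ t : ℝ, u - x = t • (y - x) := by
  rintro ⟨t, ht⟩
  rw [hAc.frontier_eq] at hx hy
  obtain ⟨p, q, hp, hq, hpq, rfl⟩ := ho
  obtain rfl : u = x + t • (y - x) := by rw [← ht]; abel
  rcases lt_or_ge t 0 with h | h
  · refine hx.1.2 (beyond A hA x (y - x) q t hq h ?_ huA)
    convert hoA using 1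
    obtain rfl : p = 1 - q := by linarith
    module
  rcases lt_or_ge 1 t with h1 | h1
  · refine hy.1.2 (beyond A hA y (x - y) p (1 - t) hp (by linarith) ?_ ?_)
    · convert hoA using 1
      obtain rfl : p = 1 - q := by linarith
      module
    · convert huA using 1
      module
  · refine huB ?_
    have := hB hx.2 hy.2 (by linarith : 0 ≤ 1 - t) h (by ring)
    convert this using 1
    module

/-- If `∂A ∩ B` is not connected, some `x, y` in it are separated along `∂A` by points `u, w` of
`A \ B` strictly on opposite sides of the line `xy`. The functional `f` measures the side. -/
theorem quad (A B : Set Pt) (hA : Convex ℝ A) (hAc : IsClosed A) (hAb : Bornology.IsBounded A)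
    (hB : Convex ℝ B) (hn : ¬ IsPreconnected (frontier A ∩ B)) :
    ∃ x ∈ frontier A ∩ B, ∃ y ∈ frontier A ∩ B, ∃ u ∈ A \ B, ∃ w ∈ A \ B, y - x ≠ 0 ∧
      ∃ f : Pt →ₗ[ℝ] ℝ, f (y - x) = 0 ∧ (∀ z, f z = 0 → ∃ t : ℝ, z = t • (y - x)) ∧
        0 < f (u - x) ∧ f (w - x) < 0 := by
  by_contra hcon
  refine hn (isPreconnected_of_forall_pair fun x hx y hy => ?_)
  by_cases hxy : y - x = 0
  · obtain rfl : y = x := sub_eq_zero.1 hxy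
    exact ⟨{y}, by simpa using hx, rfl, rfl, isPreconnected_singleton⟩
  by_cases hseg : ∃ o ∈ openSegment ℝ x y, o ∈ interior A
  · obtain ⟨o, ho, hoA⟩ := hseg
    obtain ⟨f, hfe, hker, v, hv⟩ := exists_det (y - x) hxy
    have hfy : f y = f x := by rw [map_sub] at hfe; linarith
    have hfo : f o = f x := by
      obtain ⟨p, q, hp, hq, hpq, rfl⟩ := ho
      simp only [map_add, map_smul, smul_eq_mul, hfy]
      rw [← add_mul, hpq, one_mul]
    have hfne : ∀ u ∈ A, u ∉ B → f (u - x) ≠ 0 := fun u huA huB h =>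
      strict_side A B hA hAc hB x y o u hx hy ho hoA huA huB (hker _ h)
    by_cases h1 : frontier A ∩ {z | f o ≤ f z} ⊆ B
    · exact ⟨_, fun z hz => ⟨hz.1, h1 hz⟩, ⟨hx.1, hfo.le⟩, ⟨hy.1, (hfo.trans hfy.symm).le⟩,
        arc A hA hAb o hoA f v hv⟩
    by_cases h2 : frontier A ∩ {z | (-f) o ≤ (-f) z} ⊆ B
    · refine ⟨_, fun z hz => ⟨hz.1, h2 hz⟩, ⟨hx.1, ?_⟩, ⟨hy.1, ?_⟩,
        arc A hA hAb o hoA (-f) (-v) (by simpa using hv)⟩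
      · simp [hfo]
      · simp [hfo, hfy]
    obtain ⟨u, ⟨huA, hu⟩, huB⟩ := Set.not_subset.1 h1
    obtain ⟨w, ⟨hwA, hw⟩, hwB⟩ := Set.not_subset.1 h2
    have huA' := hAc.frontier_subset huA
    have hwA' := hAc.frontier_subset hwA
    have hu' : f o ≤ f u := hu
    have hw' : f w ≤ f o := by simpa using hw
    refine (hcon ⟨x, hx, y, hy, u, ⟨huA', huB⟩, w, ⟨hwA', hwB⟩, hxy, f, hfe, hker, ?_, ?_⟩).elim
    · refine lt_of_le_of_ne ?_ (hfne u huA' huB).symm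
      rw [map_sub]; linarith
    · refine lt_of_le_of_ne ?_ (hfne w hwA' hwB)
      rw [map_sub]; linarith
  · refine ⟨segment ℝ x y, fun z hz => ⟨?_, hB.segment_subset hx.2 hy.2 hz⟩,
      left_mem_segment _ _ _, right_mem_segment _ _ _, (convex_segment x y).isPreconnected⟩
    have hzA := hA.segment_subset (hAc.frontier_subset hx.1) (hAc.frontier_subset hy.1) hz
    rw [← insert_endpoints_openSegment] at hz
    rcases hz with rfl | rfl | hz
    · exact hx.1
    · exact hy.1
    · rw [hAc.frontier_eq]
      exact ⟨hzA, fun h => hseg ⟨z, hz, h⟩⟩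

/-! ### Supporting functionals -/

/-- The supporting hyperplane theorem in finite dimension. -/
theorem supp (K : Set Pt) (hK : Convex ℝ K) (hint : (interior K).Nonempty) (x : Pt)
    (hx : x ∉ interior K) : ∃ g : Pt →ₗ[ℝ] ℝ, g ≠ 0 ∧ ∀ z ∈ K, g z ≤ g x := by
  obtain ⟨g, hg⟩ := geometric_hahn_banach_open_point hK.interior isOpen_interior hx
  refine ⟨g, ?_, ?_⟩
  · rintro h
    obtain ⟨z, hz⟩ := hint
    have h1 := hg z hz
    have h2 : ∀ z, g z = 0 := fun z => by
      have := LinearMap.congr_fun h z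
      simpa using this
    rw [h2, h2] at h1
    exact lt_irrefl _ h1
  · intro z hz
    have h1 : z ∈ closure (interior K) := by
      rw [hK.closure_interior_eq_closure_of_nonempty_interior hint]
      exact subset_closure hz
    have h2 : closure (interior K) ⊆ {z | g z ≤ g x} :=
      closure_minimal (fun z hz => (hg z hz).le) (isClosed_le g.continuous continuous_const)
    exact h2 h1

/-- If `K` contains `x + e` and points strictly on both sides of the line through `x` in direction
`e`, a functional supporting `K` at `x` is negative on `e`, so it can be scaled to take the value
`-1` there. -/
theorem norm_supp (K : Set Pt) (hK : Convex ℝ K) (hint : (interior K).Nonempty) (x e u w : Pt)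
    (hx : x ∉ interior K) (he : x + e ∈ K) (hu : x + u ∈ K) (hw : x + w ∈ K)
    (f : Pt →ₗ[ℝ] ℝ) (hker : ∀ z, f z = 0 → ∃ t : ℝ, z = t • e)
    (hfu : 0 < f u) (hfw : f w < 0) :
    ∃ g : Pt →ₗ[ℝ] ℝ, g e = -1 ∧ ∀ z, x + z ∈ K → g z ≤ 0 := by
  obtain ⟨g, hg0, hg⟩ := supp K hK hint x hx
  have hg' : ∀ z, x + z ∈ K → g z ≤ 0 := fun z hz => by
    have := hg _ hz
    rw [map_add] at this
    linarith
  -- Otherwise `g` would be a multiple of `f` that is nonpositive at both `u` and `w`, hence zero.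
  have hne : g e ≠ 0 := by
    intro h0
    have key : ∀ z, f u * g z = f z * g u := fun z => by
      obtain ⟨t, ht⟩ := hker (f u • z - f z • u) (by simp; ring)
      have := congrArg g ht
      simp only [map_sub, map_smul, smul_eq_mul, h0] at this
      linarith
    have hgu : g u = 0 := by
      nlinarith [key w, hg' u hu, hg' w hw, mul_nonneg hfu.le (neg_nonneg.2 (hg' w hw))]
    apply hg0
    ext z
    have := key z
    rw [hgu, mul_zero] at this
    simpa [hfu.ne'] using this
  have hlt : g e < 0 := lt_of_le_of_ne (hg' e he) hne
  refine ⟨(-g e)⁻¹ • g, ?_, fun z hz => ?_⟩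
  · simp only [LinearMap.smul_apply, smul_eq_mul]
    field_simp
  · simp only [LinearMap.smul_apply, smul_eq_mul]
    exact mul_nonpos_of_nonneg_of_nonpos (inv_nonneg.2 (by linarith)) (hg' z hz)

/-! ### Position of the four centres

Throughout, `e = y - x`, and `u`, `w` stand for the differences `u - x`, `w - x` of the points of
`quad`. -/

/-- A functional vanishing on `e` is a multiple of `f`. -/
theorem prop_f (e u : Pt) (f h : Pt →ₗ[ℝ] ℝ) (hker : ∀ z, f z = 0 → ∃ t : ℝ, z = t • e)
    (hfu : 0 < f u) (he : h e = 0) : ∃ κ : ℝ, ∀ z, h z = κ * f z := by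
  refine ⟨h u / f u, fun z => ?_⟩
  obtain ⟨t, ht⟩ := hker (f u • z - f z • u) (by simp; ring)
  have := congrArg h ht
  simp only [map_sub, map_smul, smul_eq_mul, he] at this
  field_simp
  linarith

/-- The functional `m` separating `u` from `C_c` is a nonnegative multiple of `ga` or of `gb`, according
to the sign of `m e`, plus a positive multiple of `f`; this bounds `f c`. -/
theorem half_weak (a b c e u : Pt) (f ga gb m : Pt →ₗ[ℝ] ℝ) (hfe : f e = 0)
    (hker : ∀ z, f z = 0 → ∃ t : ℝ, z = t • e) (hfu : 0 < f u)
    (ga_e : ga e = -1) (ga_u : ga u ≤ 0) (ga_c : ga (a - c) ≤ 0)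
    (gb_e : gb (-e) = -1) (gb_u : gb (u - e) ≤ 0) (gb_c : gb (b - c) ≤ 0)
    (m_u : 0 < m u) (m_e : m e < m u) (m_a : m (c - a) < 0) (m_b : m (c - b) < 0) :
    (m e ≤ 0 ∧ f c < f a) ∨ (0 ≤ m e ∧ f c < f b) := by
  simp only [map_sub, map_neg] at *
  rcases le_total (m e) 0 with h | h
  · left
    obtain ⟨κ, hκ⟩ := prop_f e u f (m + (m e) • ga) hker hfu (by simp [ga_e])
    simp only [LinearMap.add_apply, LinearMap.smul_apply, smul_eq_mul] at hκ
    have h1 : 0 < κ * f u := by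
      rw [← hκ]; nlinarith [mul_nonneg_of_nonpos_of_nonpos h ga_u]
    have h2 : 0 < κ := pos_of_mul_pos_left h1 hfu.le
    have h3 : κ * (f c - f a) < 0 := by
      rw [mul_sub, ← hκ, ← hκ]; nlinarith [mul_nonneg_of_nonpos_of_nonpos h ga_c]
    exact ⟨h, by nlinarith⟩
  · right
    obtain ⟨κ, hκ⟩ := prop_f e u f (m - (m e) • gb) hker hfu (by
      simp only [LinearMap.sub_apply, LinearMap.smul_apply, smul_eq_mul]
      rw [neg_inj.1 gb_e]; ring)
    simp only [LinearMap.sub_apply, LinearMap.smul_apply, smul_eq_mul] at hκ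
    have hgb : gb e = 1 := neg_inj.1 gb_e
    have h1 : 0 < κ * f u := by
      rw [← hκ]; nlinarith [mul_nonpos_of_nonneg_of_nonpos h gb_u]
    have h2 : 0 < κ := pos_of_mul_pos_left h1 hfu.le
    have h3 : κ * (f c - f b) < 0 := by
      rw [mul_sub, ← hκ, ← hκ]; nlinarith [mul_nonpos_of_nonneg_of_nonpos h gb_c]
    exact ⟨h, by nlinarith⟩

/-- Write `c = a + l (b - a) + t e`, where `f b < f a`. Then `l` is positive and `c` lies weakly on the
`e`-side of the line `ab`, strictly so if `l ≤ 1`. -/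
theorem half (a b c e u : Pt) (f ga gb m : Pt →ₗ[ℝ] ℝ) (hfe : f e = 0)
    (hker : ∀ z, f z = 0 → ∃ t : ℝ, z = t • e) (hfu : 0 < f u)
    (ga_e : ga e = -1) (ga_u : ga u ≤ 0) (ga_c : ga (a - c) ≤ 0)
    (gb_e : gb (-e) = -1) (gb_u : gb (u - e) ≤ 0) (gb_a : gb (b - a) ≤ 0) (gb_c : gb (b - c) ≤ 0)
    (m_u : 0 < m u) (m_e : m e < m u) (m_a : m (c - a) < 0) (m_b : m (c - b) < 0)
    (hab : f b < f a) :
    ∃ l t : ℝ, c = a + l • (b - a) + t • e ∧ 0 < l ∧ 0 ≤ t ∧ (l ≤ 1 → 0 < t) := by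
  have hw := half_weak a b c e u f ga gb m hfe hker hfu ga_e ga_u ga_c gb_e gb_u gb_c
    m_u m_e m_a m_b
  have hne : f b - f a ≠ 0 := by linarith
  obtain ⟨l, hlf⟩ : ∃ l, f c - f a = l * (f b - f a) := ⟨_, (div_mul_cancel₀ _ hne).symm⟩
  obtain ⟨t, ht⟩ := hker (c - a - l • (b - a)) (by
    simp only [map_sub, map_smul, smul_eq_mul]
    linarith)
  obtain rfl : c = a + l • (b - a) + t • e := by rw [← ht]; abel
  have hl0 : 0 < l := by
    rcases hw with h | h <;> nlinarith [h.2]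
  have hpos : l ≤ 1 → 0 < t := by
    intro hl1
    have hme : m e ≤ 0 := by
      rcases hw with h | h
      · exact h.1
      · nlinarith [h.2]
    simp only [map_sub, map_add, map_smul, smul_eq_mul] at m_a m_b
    -- `c` is `t • e` plus a convex combination of `a` and `b`, while `m c < m a` and `m c < m b`.
    have h1 : t * m e < 0 := by
      have e1 := mul_nonneg (sub_nonneg.2 hl1) (neg_nonneg.2 m_a.le)
      have e2 := mul_pos hl0 (neg_pos.2 m_b)
      nlinarith
    nlinarith
  refine ⟨l, t, rfl, hl0, ?_, hpos⟩
  rcases le_total l 1 with h | h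
  · exact (hpos h).le
  · simp only [map_sub, map_add, map_smul, smul_eq_mul, map_neg] at gb_c gb_a gb_e
    rw [neg_inj.1 gb_e] at gb_c
    nlinarith

/-- The crossing when `ab` is not parallel to `e`. The set `S` collects the centres; `hS` is the form
in which their non-collinearity is used. -/
theorem core_lt (S : Set Pt) (a b c d e u w : Pt) (f ga gb m n : Pt →ₗ[ℝ] ℝ)
    (ha : a ∈ S) (hb : b ∈ S) (hc : c ∈ S) (hd : d ∈ S)
    (hS : ∀ p ∈ S, ∀ q ∈ S, ∀ r ∈ S, q ≠ r → p ∉ openSegment ℝ q r) (hfe : f e = 0)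
    (hker : ∀ z, f z = 0 → ∃ t : ℝ, z = t • e) (hfu : 0 < f u) (hfw : f w < 0)
    (ga_e : ga e = -1) (ga_u : ga u ≤ 0) (ga_w : ga w ≤ 0) (ga_b : ga (a - b) ≤ 0)
    (ga_c : ga (a - c) ≤ 0) (ga_d : ga (a - d) ≤ 0)
    (gb_e : gb (-e) = -1) (gb_u : gb (u - e) ≤ 0) (gb_w : gb (w - e) ≤ 0) (gb_a : gb (b - a) ≤ 0)
    (gb_c : gb (b - c) ≤ 0) (gb_d : gb (b - d) ≤ 0)
    (m_u : 0 < m u) (m_e : m e < m u) (m_a : m (c - a) < 0) (m_b : m (c - b) < 0)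
    (n_w : 0 < n w) (n_e : n e < n w) (n_a : n (d - a) < 0) (n_b : n (d - b) < 0)
    (hab : f b < f a) :
    a ≠ b ∧ c ≠ d ∧ (openSegment ℝ a b ∩ openSegment ℝ c d).Nonempty := by
  have hker' : ∀ z, (-f) z = 0 → ∃ t : ℝ, z = t • (-e) := fun z hz => by
    obtain ⟨t, ht⟩ := hker z (by simpa using hz)
    exact ⟨-t, by simpa using ht⟩
  have hfw' : 0 < (-f) (w - e) := by simp [hfe, hfw]
  obtain ⟨l, t, hcl, hl0, ht0, hlt⟩ := half a b c e u f ga gb m hfe hker hfu ga_e ga_u ga_c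
    gb_e gb_u gb_a gb_c m_u m_e m_a m_b hab
  -- The half-turn of the picture: `x ↔ y`, `a ↔ b`, `c ↔ d`, `u ↔ w`, `e ↦ -e`, `f ↦ -f`.
  obtain ⟨k, s, hdk, hk0, hs0, hks⟩ := half b a d (-e) (w - e) (-f) gb ga n (by simp [hfe]) hker'
    hfw' gb_e gb_w gb_d (by simpa using ga_e) (by simpa using ga_w) ga_b ga_d (by simpa using n_e)
    (by simpa using n_w) n_b n_a (by simpa using hab)
  have hne : a ≠ b := by rintro rfl; exact lt_irrefl _ hab
  -- If `t = 0`, then `l > 1`, so `b` lies between `a` and `c`.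
  have ht : 0 < t := by
    rcases le_or_gt l 1 with h | h
    · exact hlt h
    refine lt_of_le_of_ne ht0 ?_
    rintro rfl
    refine hS b hb a ha c hc ?_ ⟨1 - l⁻¹, l⁻¹, ?_, by positivity, by ring, ?_⟩
    · rintro h1
      have := congrArg f (h1.trans hcl)
      simp only [map_sub, map_add, map_smul, smul_eq_mul, zero_mul, add_zero] at this
      nlinarith
    · have := inv_lt_one_of_one_lt₀ h
      linarith
    · rw [hcl]
      match_scalars <;> field_simp <;> ring
  have hs : 0 < s := by
    rcases le_or_gt k 1 with h | h
    · exact hks h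
    refine lt_of_le_of_ne hs0 ?_
    rintro rfl
    refine hS a ha b hb d hd ?_ ⟨1 - k⁻¹, k⁻¹, ?_, by positivity, by ring, ?_⟩
    · rintro h1
      have := congrArg f (h1.trans hdk)
      simp only [map_sub, map_add, map_smul, smul_eq_mul, zero_mul, add_zero] at this
      nlinarith
    · have := inv_lt_one_of_one_lt₀ h
      linarith
    · rw [hdk]
      match_scalars <;> field_simp <;> ring
  have hcd : c ≠ d := by
    intro h
    rw [hcl, hdk] at h
    have h1 := congrArg f h
    have h2 := congrArg ga h
    simp only [map_sub, map_add, map_smul, smul_eq_mul, map_neg, hfe, ga_e] at h1 h2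
    have h3 : l + k - 1 = 0 := by
      have : (l + k - 1) * (f b - f a) = 0 := by linarith
      exact (mul_eq_zero.1 this).resolve_right (by linarith)
    obtain rfl : l = 1 - k := by linarith
    linarith
  have hea : ga (a + l • (b - a) + t • e) = ga a + l * (ga b - ga a) - t := by
    simp only [map_add, map_sub, map_smul, smul_eq_mul, ga_e]; ring
  have hgb : gb e = 1 := by rwa [map_neg, neg_inj] at gb_e
  have heb : gb (b + k • (a - b) + s • -e) = gb b + k * (gb a - gb b) - s := by
    simp only [map_add, map_sub, map_neg, map_smul, smul_eq_mul, hgb]; ring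
  have hec : gb (a + l • (b - a) + t • e) = gb a + l * (gb b - gb a) + t := by
    simp only [map_add, map_sub, map_smul, smul_eq_mul, hgb]; ring
  have hed : ga (b + k • (a - b) + s • -e) = ga b + k * (ga a - ga b) + s := by
    simp only [map_add, map_sub, map_neg, map_smul, smul_eq_mul, ga_e]; ring
  have hT : 0 < s + t := by linarith
  -- `a + v • (b - a)` is the point where the line `ab` meets `[c, d]`.
  set v := (s * l + t * (1 - k)) / (s + t) with hv
  have ho : (s / (s + t)) • c + (t / (s + t)) • d = a + v • (b - a) := by
    rw [hcl, hdk, hv]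
    match_scalars <;> field_simp <;> ring
  have hmem : a + v • (b - a) ∈ openSegment ℝ c d :=
    ⟨s / (s + t), t / (s + t), by positivity, by positivity, by field_simp, ho⟩
  have hvT : v * (s + t) = s * l + t * (1 - k) := by rw [hv]; field_simp
  clear_value v
  rw [hcl, map_sub] at ga_c gb_c
  rw [hdk, map_sub] at ga_d gb_d
  rw [hea] at ga_c
  rw [hec] at gb_c
  rw [hed] at ga_d
  rw [heb] at gb_d
  have hK : 0 < ga b - ga a := pos_of_mul_pos_right (a := l) (by linarith) hl0.le
  have hQ : 0 < gb a - gb b := pos_of_mul_pos_right (a := k) (by linarith) hk0.le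
  have hv0 : 0 ≤ v := by
    have : 0 ≤ (v * (s + t)) * (ga b - ga a) := by
      rw [hvT]
      linarith [mul_nonpos_of_nonneg_of_nonpos hs.le ga_c,
        mul_nonpos_of_nonneg_of_nonpos ht.le ga_d]
    exact nonneg_of_mul_nonneg_left (nonneg_of_mul_nonneg_left this hK) hT
  have hv1 : 0 ≤ 1 - v := by
    have : 0 ≤ ((1 - v) * (s + t)) * (gb a - gb b) := by
      rw [sub_mul, hvT]
      linarith [mul_nonpos_of_nonneg_of_nonpos hs.le gb_c,
        mul_nonpos_of_nonneg_of_nonpos ht.le gb_d]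
    exact nonneg_of_mul_nonneg_left (nonneg_of_mul_nonneg_left this hQ) hT
  refine ⟨hne, hcd, a + v • (b - a), ⟨1 - v, v, ?_, ?_, by ring, by module⟩, hmem⟩
  · refine lt_of_le_of_ne hv1 fun h => ?_
    obtain h' : v = 1 := by linarith
    refine hS b hb c hc d hd hcd ?_
    simpa [h'] using hmem
  · refine lt_of_le_of_ne hv0 fun h => ?_
    refine hS a ha c hc d hd hcd ?_
    simpa [← h] using hmem

/-- The crossing for `f b ≤ f a`. When `f b = f a`, in particular when `a = b`, the points `c` and `d`
lie strictly on opposite sides of the line through `a` in direction `e`. -/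
theorem core (S : Set Pt) (a b c d e u w : Pt) (f ga gb m n : Pt →ₗ[ℝ] ℝ)
    (ha : a ∈ S) (hb : b ∈ S) (hc : c ∈ S) (hd : d ∈ S)
    (hS : ∀ p ∈ S, ∀ q ∈ S, ∀ r ∈ S, q ≠ r → p ∉ openSegment ℝ q r) (hfe : f e = 0)
    (hker : ∀ z, f z = 0 → ∃ t : ℝ, z = t • e) (hfu : 0 < f u) (hfw : f w < 0)
    (ga_e : ga e = -1) (ga_u : ga u ≤ 0) (ga_w : ga w ≤ 0) (ga_b : ga (a - b) ≤ 0)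
    (ga_c : ga (a - c) ≤ 0) (ga_d : ga (a - d) ≤ 0)
    (gb_e : gb (-e) = -1) (gb_u : gb (u - e) ≤ 0) (gb_w : gb (w - e) ≤ 0) (gb_a : gb (b - a) ≤ 0)
    (gb_c : gb (b - c) ≤ 0) (gb_d : gb (b - d) ≤ 0)
    (m_u : 0 < m u) (m_e : m e < m u) (m_a : m (c - a) < 0) (m_b : m (c - b) < 0)
    (n_w : 0 < n w) (n_e : n e < n w) (n_a : n (d - a) < 0) (n_b : n (d - b) < 0)
    (hab : f b ≤ f a) :
    a ≠ b ∧ c ≠ d ∧ (openSegment ℝ a b ∩ openSegment ℝ c d).Nonempty := by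
  have hea : ∀ r : ℝ, ga (a + r • e) = ga a - r := fun r => by
    simp only [map_add, map_smul, smul_eq_mul, ga_e]; ring
  have heb : ∀ r : ℝ, gb (a + r • e) = gb a + r := fun r => by
    rw [map_neg, neg_inj] at gb_e
    simp only [map_add, map_smul, smul_eq_mul, gb_e]; ring
  have hker' : ∀ z, (-f) z = 0 → ∃ t : ℝ, z = t • (-e) := fun z hz => by
    obtain ⟨t, ht⟩ := hker z (by simpa using hz)
    exact ⟨-t, by simpa using ht⟩
  have hfw' : 0 < (-f) (w - e) := by simp [hfe, hfw]
  rcases hab.eq_or_lt with hab | hab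
  -- Here `b - a` is a multiple of `e`; let the line through `a` in direction `e` meet `[c, d]` in
  -- `a + v • e`.
  · have hfc : f c < f a := by
      rcases half_weak a b c e u f ga gb m hfe hker hfu ga_e ga_u ga_c gb_e gb_u gb_c
        m_u m_e m_a m_b with h | h <;> linarith [h.2]
    have hfd : f a < f d := by
      rcases half_weak b a d (-e) (w - e) (-f) gb ga n (by simp [hfe]) hker' hfw' gb_e gb_w gb_d
        (by simpa using ga_e) (by simpa using ga_w) ga_d (by simpa using n_e)
        (by simpa using n_w) n_b n_a with h | h <;>
      · have := h.2
        simp only [LinearMap.neg_apply] at this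
        linarith
    have hcd : c ≠ d := by rintro rfl; linarith
    obtain ⟨r, hr⟩ := hker (b - a) (by rw [map_sub]; linarith)
    obtain rfl : b = a + r • e := by rw [← hr]; abel
    obtain ⟨p, q, hp0, hq0, hpq, hf⟩ : ∃ p q : ℝ, 0 < p ∧ 0 < q ∧ p + q = 1 ∧
        p * f c + q * f d = f a := by
      have : 0 < f d - f c := by linarith
      refine ⟨(f d - f a) / (f d - f c), (f a - f c) / (f d - f c), div_pos (by linarith) this,
        div_pos (by linarith) this, ?_, ?_⟩
      · field_simp; ring
      · field_simp; ring
    have hmem : p • c + q • d ∈ openSegment ℝ c d := ⟨p, q, hp0, hq0, hpq, rfl⟩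
    obtain ⟨v, hv⟩ := hker (p • c + q • d - a) (by
      simp only [map_sub, map_add, map_smul, smul_eq_mul]
      linarith)
    have ho : p • c + q • d = a + v • e := by rw [← hv]; abel
    have hga := congrArg ga ho
    have hgb := congrArg gb ho
    rw [ho] at hmem
    rw [hea, map_add, map_smul, map_smul, smul_eq_mul, smul_eq_mul] at hga
    rw [heb, map_add, map_smul, map_smul, smul_eq_mul, smul_eq_mul] at hgb
    rw [map_sub] at ga_c ga_d gb_c gb_d
    rw [heb] at gb_c gb_d
    obtain rfl : p = 1 - q := by linarith
    have hv0 : v ≤ 0 := by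
      linarith [mul_nonpos_of_nonneg_of_nonpos hp0.le ga_c,
        mul_nonpos_of_nonneg_of_nonpos hq0.le ga_d]
    have hvr : r ≤ v := by
      linarith [mul_nonpos_of_nonneg_of_nonpos hp0.le gb_c,
        mul_nonpos_of_nonneg_of_nonpos hq0.le gb_d]
    have hv0' : v < 0 := by
      refine lt_of_le_of_ne hv0 ?_
      rintro rfl
      rw [zero_smul, add_zero] at hmem
      exact hS a ha c hc d hd hcd hmem
    have hvr' : r < v := by
      refine lt_of_le_of_ne hvr ?_
      rintro rfl
      exact hS _ hb c hc d hd hcd hmem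
    have hr0 : r < 0 := hvr'.trans hv0'
    refine ⟨?_, hcd, _, ⟨(v - r) / (-r), v / r, div_pos (by linarith) (by linarith),
      div_pos_of_neg_of_neg hv0' hr0, ?_, rfl⟩, ?_⟩
    · intro h
      have h' := congrArg ga h
      rw [hea] at h'
      linarith
    · have := hr0.ne
      field_simp; ring
    · have := hr0.ne
      convert hmem using 1
      match_scalars <;> field_simp <;> ring
  · exact core_lt S a b c d e u w f ga gb m n ha hb hc hd hS hfe hker hfu hfw ga_e ga_u ga_w ga_b
      ga_c ga_d gb_e gb_u gb_w gb_a gb_c gb_d m_u m_e m_a m_b n_w n_e n_a n_b hab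

theorem tr_shift (C : Set Pt) (a b x : Pt) (h : x ∈ tr b C) : x + (a - b) ∈ tr a C := by
  obtain ⟨z, hz, rfl⟩ := h
  exact ⟨z, hz, by simp only; abel⟩

/-! ### From translates of `C` to the inequalities -/

/-- A quadruple `x, y, u, w` as in `quad` forces the open segments `ab` and `cd` to meet. The remaining
order `f a ≤ f b` is reduced to `core` by replacing `f` with `-f`, which exchanges `u, c` and
`w, d`. -/
theorem translates_cross (C : Set Pt) (S : Set Pt) (hK : ∀ p, Convex ℝ (tr p C))
    (hcl : ∀ p, IsClosed (tr p C)) (hint : ∀ p, (interior (tr p C)).Nonempty)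
    (a b c d x y u w : Pt) (f : Pt →ₗ[ℝ] ℝ)
    (ha : a ∈ S) (hb : b ∈ S) (hc : c ∈ S) (hd : d ∈ S)
    (hS : ∀ p ∈ S, ∀ q ∈ S, ∀ r ∈ S, q ≠ r → p ∉ openSegment ℝ q r) (hfe : f (y - x) = 0)
    (hker : ∀ z, f z = 0 → ∃ t : ℝ, z = t • (y - x)) (hfu : 0 < f (u - x)) (hfw : f (w - x) < 0)
    (hx : ∀ p ∈ ({a, b, c, d} : Set Pt), x ∈ tr p C)
    (hy : ∀ p ∈ ({a, b, c, d} : Set Pt), y ∈ tr p C)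
    (hu : ∀ p ∈ ({a, b} : Set Pt), u ∈ tr p C) (hw : ∀ p ∈ ({a, b} : Set Pt), w ∈ tr p C)
    (hxa : x ∉ interior (tr a C)) (hyb : y ∉ interior (tr b C))
    (huc : u ∉ tr c C) (hwd : w ∉ tr d C) :
    a ≠ b ∧ c ≠ d ∧ (openSegment ℝ a b ∩ openSegment ℝ c d).Nonempty := by
  simp only [Set.mem_insert_iff, Set.mem_singleton_iff, forall_eq_or_imp, forall_eq] at hx hy hu hw
  obtain ⟨hxa', hxb, hxc, hxd⟩ := hx
  obtain ⟨hya, hyb', hyc, hyd⟩ := hy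
  obtain ⟨hua, hub⟩ := hu
  obtain ⟨hwa, hwb⟩ := hw
  obtain ⟨ga, ga_e, hga⟩ := norm_supp _ (hK a) (hint a) x (y - x) (u - x) (w - x) hxa
    (by simpa using hya) (by simpa using hua) (by simpa using hwa) f hker hfu hfw
  obtain ⟨gb, gb_e, hgb⟩ := norm_supp _ (hK b) (hint b) y (-(y - x)) (u - x - (y - x))
    (w - x - (y - x)) hyb (by simpa using hxb) (by simpa using hub) (by simpa using hwb) f
    (fun z hz => by
      obtain ⟨t, ht⟩ := hker z hz
      exact ⟨-t, by rw [ht]; module⟩)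
    (by rw [map_sub f (u - x), hfe]; linarith) (by rw [map_sub f (w - x), hfe]; linarith)
  obtain ⟨m, s, hm, hms⟩ := geometric_hahn_banach_closed_point (hK c) (hcl c) huc
  obtain ⟨n, t, hn, hnt⟩ := geometric_hahn_banach_closed_point (hK d) (hcl d) hwd
  have hm' : ∀ z ∈ tr c C, m z < m u := fun z hz => (hm z hz).trans hms
  have hn' : ∀ z ∈ tr d C, n z < n w := fun z hz => (hn z hz).trans hnt
  have m_u := hm' x hxc
  have m_e := hm' y hyc
  have m_a := hm' _ (tr_shift C c a u hua)
  have m_b := hm' _ (tr_shift C c b u hub)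
  have n_w := hn' x hxd
  have n_e := hn' y hyd
  have n_a := hn' _ (tr_shift C d a w hwa)
  have n_b := hn' _ (tr_shift C d b w hwb)
  have gau := hga (u - x) (by simpa using hua)
  have gaw := hga (w - x) (by simpa using hwa)
  have gab := hga _ (tr_shift C a b x hxb)
  have gac := hga _ (tr_shift C a c x hxc)
  have gad := hga _ (tr_shift C a d x hxd)
  have gbu := hgb (u - x - (y - x)) (by simpa using hub)
  have gbw := hgb (w - x - (y - x)) (by simpa using hwb)
  have gba := hgb _ (tr_shift C b a y hya)
  have gbc := hgb _ (tr_shift C b c y hyc)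
  have gbd := hgb _ (tr_shift C b d y hyd)
  rw [map_add] at m_a m_b n_a n_b
  have m_u' : 0 < (m : Pt →ₗ[ℝ] ℝ) (u - x) := by simpa using m_u
  have m_e' : (m : Pt →ₗ[ℝ] ℝ) (y - x) < (m : Pt →ₗ[ℝ] ℝ) (u - x) := by simpa using m_e
  have n_w' : 0 < (n : Pt →ₗ[ℝ] ℝ) (w - x) := by simpa using n_w
  have n_e' : (n : Pt →ₗ[ℝ] ℝ) (y - x) < (n : Pt →ₗ[ℝ] ℝ) (w - x) := by simpa using n_e
  have m_a' : (m : Pt →ₗ[ℝ] ℝ) (c - a) < 0 := by rw [ContinuousLinearMap.coe_coe]; linarith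
  have m_b' : (m : Pt →ₗ[ℝ] ℝ) (c - b) < 0 := by rw [ContinuousLinearMap.coe_coe]; linarith
  have n_a' : (n : Pt →ₗ[ℝ] ℝ) (d - a) < 0 := by rw [ContinuousLinearMap.coe_coe]; linarith
  have n_b' : (n : Pt →ₗ[ℝ] ℝ) (d - b) < 0 := by rw [ContinuousLinearMap.coe_coe]; linarith
  rcases le_total (f b) (f a) with h | h
  · exact core S a b c d _ _ _ f ga gb m n ha hb hc hd hS hfe hker hfu hfw ga_e gau gaw gab gac gad
      gb_e gbu gbw gba gbc gbd m_u' m_e' m_a' m_b' n_w' n_e' n_a' n_b' h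
  · obtain ⟨h1, h2, h3⟩ := core S a b d c _ _ _ (-f) ga gb n m ha hb hd hc hS
      (by rw [LinearMap.neg_apply, hfe, neg_zero])
      (fun z hz => hker z (neg_eq_zero.1 hz))
      (by rw [LinearMap.neg_apply]; linarith) (by rw [LinearMap.neg_apply]; linarith)
      ga_e gaw gau gab gad gac gb_e gbw gbu gba gbd gbc n_w' n_e' n_a' n_b' m_u' m_e' m_a' m_b'
      (neg_le_neg h)
    exact ⟨h1, h2.symm, by rwa [openSegment_symm ℝ c d]⟩

/-- One half of the plain intersection property; the other is obtained by exchanging the pairs. -/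
theorem half_plain (C : Set Pt) (hC : IsConvexBody C) (S : Set Pt) (p₁ p₂ q₁ q₂ : Pt)
    (hp₁ : p₁ ∈ S) (hp₂ : p₂ ∈ S) (hq₁ : q₁ ∈ S) (hq₂ : q₂ ∈ S)
    (hS : ∀ p ∈ S, ∀ q ∈ S, ∀ r ∈ S, q ≠ r → p ∉ openSegment ℝ q r)
    (hncross : ¬ (openSegment ℝ p₁ p₂ ∩ openSegment ℝ q₁ q₂).Nonempty) :
    IsPreconnected (frontier (tr p₁ C ∩ tr p₂ C) ∩ (tr q₁ C ∩ tr q₂ C)) := by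
  obtain ⟨hCc, hCv, hCi⟩ := hC
  have hK : ∀ p, Convex ℝ (tr p C) := fun p => hCv.translate p
  have hcomp : ∀ p, IsCompact (tr p C) := fun p => hCc.image (by fun_prop)
  have hcl : ∀ p, IsClosed (tr p C) := fun p => (hcomp p).isClosed
  have hint : ∀ p, (interior (tr p C)).Nonempty := fun p => by
    have : tr p C = Homeomorph.addLeft p '' C := rfl
    rw [this, ← Homeomorph.image_interior]
    exact hCi.image _
  by_contra hn
  obtain ⟨x, hx, y, hy, u, hu, w, hw, -, f, hfe, hker, hfu, hfw⟩ := quad _ _ ((hK p₁).inter (hK p₂))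
    ((hcl p₁).inter (hcl p₂)) ((hcomp p₁).isBounded.subset Set.inter_subset_left)
    ((hK q₁).inter (hK q₂)) hn
  rw [((hcl p₁).inter (hcl p₂)).frontier_eq, interior_inter] at hx hy
  obtain ⟨⟨⟨hx1, hx2⟩, hxi⟩, hx3, hx4⟩ := hx
  obtain ⟨⟨⟨hy1, hy2⟩, hyi⟩, hy3, hy4⟩ := hy
  obtain ⟨⟨hu1, hu2⟩, hu'⟩ := hu
  obtain ⟨⟨hw1, hw2⟩, hw'⟩ := hw
  have e1 : ∃ a, (a = p₁ ∨ a = p₂) ∧ x ∉ interior (tr a C) := by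
    by_contra! h; exact hxi ⟨h _ (.inl rfl), h _ (.inr rfl)⟩
  have e2 : ∃ a, (a = p₁ ∨ a = p₂) ∧ y ∉ interior (tr a C) := by
    by_contra! h; exact hyi ⟨h _ (.inl rfl), h _ (.inr rfl)⟩
  have e3 : ∃ a, (a = q₁ ∨ a = q₂) ∧ u ∉ tr a C := by
    by_contra! h; exact hu' ⟨h _ (.inl rfl), h _ (.inr rfl)⟩
  have e4 : ∃ a, (a = q₁ ∨ a = q₂) ∧ w ∉ tr a C := by
    by_contra! h; exact hw' ⟨h _ (.inl rfl), h _ (.inr rfl)⟩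
  obtain ⟨a, ha, hxa⟩ := e1
  obtain ⟨b, hb, hyb⟩ := e2
  obtain ⟨c, hc, huc⟩ := e3
  obtain ⟨d, hd, hwd⟩ := e4
  obtain ⟨hab, hcd, hcr⟩ := translates_cross C S hK hcl hint a b c d x y u w f
    (by rcases ha with rfl | rfl <;> assumption) (by rcases hb with rfl | rfl <;> assumption)
    (by rcases hc with rfl | rfl <;> assumption) (by rcases hd with rfl | rfl <;> assumption)
    hS hfe hker hfu hfw
    (by rintro p (rfl | rfl | rfl | rfl)
        · rcases ha with rfl | rfl <;> assumption
        · rcases hb with rfl | rfl <;> assumption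
        · rcases hc with rfl | rfl <;> assumption
        · rcases hd with rfl | rfl <;> assumption)
    (by rintro p (rfl | rfl | rfl | rfl)
        · rcases ha with rfl | rfl <;> assumption
        · rcases hb with rfl | rfl <;> assumption
        · rcases hc with rfl | rfl <;> assumption
        · rcases hd with rfl | rfl <;> assumption)
    (by rintro p (rfl | rfl)
        · rcases ha with rfl | rfl <;> assumption
        · rcases hb with rfl | rfl <;> assumption)
    (by rintro p (rfl | rfl)
        · rcases ha with rfl | rfl <;> assumption
        · rcases hb with rfl | rfl <;> assumption)
    hxa hyb huc hwd
  have h1 : openSegment ℝ a b = openSegment ℝ p₁ p₂ := by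
    rcases ha with rfl | rfl <;> rcases hb with rfl | rfl
    · exact absurd rfl hab
    · rfl
    · exact openSegment_symm ℝ _ _
    · exact absurd rfl hab
  have h2 : openSegment ℝ c d = openSegment ℝ q₁ q₂ := by
    rcases hc with rfl | rfl <;> rcases hd with rfl | rfl
    · exact absurd rfl hcd
    · rfl
    · exact openSegment_symm ℝ _ _
    · exact absurd rfl hcd
  rw [h1, h2] at hcr
  exact hncross hcr

/-- Let `C` be a convex body and `p₁, p₂, p₁', p₂'` points such that
`I = C_{p₁} ∩ C_{p₂}` and `I' = C_{p₁'} ∩ C_{p₂'}` have nonempty interiors, any three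
pairwise-distinct points among `p₁, p₂, p₁', p₂'` are not collinear, the segments `[p₁,p₂]` and
`[p₁',p₂']` do not cross, and `I ∩ I' ≠ ∅`.  Then `I` and `I'` intersect plainly. -/
theorem stmt11 (C : Set Pt) (hC : IsConvexBody C) (p₁ p₂ p₁' p₂' : Pt)
    (hI : (interior (tr p₁ C ∩ tr p₂ C)).Nonempty)
    (hI' : (interior (tr p₁' C ∩ tr p₂' C)).Nonempty)
    (hcol : ∀ x ∈ ({p₁, p₂, p₁', p₂'} : Set Pt), ∀ y ∈ ({p₁, p₂, p₁', p₂'} : Set Pt),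
      ∀ z ∈ ({p₁, p₂, p₁', p₂'} : Set Pt), x ≠ y → x ≠ z → y ≠ z →
        ¬ Collinear ℝ ({x, y, z} : Set Pt))
    (hncross : ¬ SegCross p₁ p₂ p₁' p₂')
    (hmeet : ((tr p₁ C ∩ tr p₂ C) ∩ (tr p₁' C ∩ tr p₂' C)).Nonempty) :
    PlainlyIntersect (tr p₁ C ∩ tr p₂ C) (tr p₁' C ∩ tr p₂' C) := by
  have hS : ∀ p ∈ ({p₁, p₂, p₁', p₂'} : Set Pt), ∀ q ∈ ({p₁, p₂, p₁', p₂'} : Set Pt),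
      ∀ r ∈ ({p₁, p₂, p₁', p₂'} : Set Pt), q ≠ r → p ∉ openSegment ℝ q r := by
    rintro p hp q hq r hr hqr ⟨s, t, hs, ht, hst, rfl⟩
    obtain rfl : s = 1 - t := by linarith
    refine hcol _ hp q hq r hr ?_ ?_ hqr ?_
    · intro h
      have : t • (r - q) = 0 := by
        rw [← sub_eq_zero] at h
        rw [← h]; module
      rcases smul_eq_zero.1 this with h | h
      · exact ht.ne' h
      · exact hqr (sub_eq_zero.1 h).symm
    · intro h
      have : (1 - t) • (q - r) = 0 := by
        rw [← sub_eq_zero] at h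
        rw [← h]; module
      rcases smul_eq_zero.1 this with h | h
      · exact hs.ne' h
      · exact hqr (sub_eq_zero.1 h)
    · rw [collinear_iff_of_mem (p₀ := q) (by simp)]
      refine ⟨r - q, ?_⟩
      rintro z (rfl | rfl | rfl)
      · exact ⟨t, by simp only [vadd_eq_add]; module⟩
      · exact ⟨0, by simp⟩
      · exact ⟨1, by simp⟩
  refine ⟨half_plain C hC _ p₁ p₂ p₁' p₂' (by simp) (by simp) (by simp) (by simp) hS hncross,
    half_plain C hC _ p₁' p₂' p₁ p₂ (by simp) (by simp) (by simp) (by simp) hS ?_⟩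
  rwa [Set.inter_comm]
end
end
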